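/- arXiv:1611.09060 — 6 statements merged into one kernel-verified Lean document; each statement's English description precedes it below -/
import Mathlib

section
/- For integers ℓ ≥ k ≥ 1, if every subgraph H of a finite simple graph G has a vertex of degree at most k or an ℓ-light edge, then G is (k+1, ℓ−k)-choosable. -/
/-!
Put `d = ℓ - k` and fix lists of more than `k` colours. Delete an edge `e` of `G`, one with an end
of degree at most `k` if possible and an `ℓ`-light one otherwise, and colour `G - e` by induction.
If the colouring fails on `G`, then some end `v` of `e` sees at most `k` colours: either `v` has
degree at most `k`, or `v` is an end of a light edge with more than `d` neighbours of its own
colour, leaving fewer than `ℓ - d = k` neighbours to contribute other colours. Recolouring `v` with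
a colour of its list that is absent from its neighbourhood removes every conflict at `v` and
creates none elsewhere.
-/

open SimpleGraph

universe u v

section Defs

variable {V : Type u} {α : Type v}

/-- `H` is isomorphic to a subgraph of `G`: there is an injective graph homomorphism. -/
def ContainsSubgraph (G : SimpleGraph V) (H : SimpleGraph α) : Prop :=
  ∃ f : H →g G, Function.Injective f

/-- `G` is `(k,d)`-choosable: for every assignment of lists of exactly `k` colours there is a
colouring from the lists in which every vertex has at most `d` neighbours of its own colour. -/
def Choosable (G : SimpleGraph V) (k : ℕ) (d : ℤ) : Prop :=
  ∀ L : V → Finset ℕ, (∀ v, (L v).card = k) →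
    ∃ c : V → ℕ, (∀ v, c v ∈ L v) ∧
      ∀ v, (({w | G.Adj v w ∧ c w = c v}.ncard : ℤ)) ≤ d

/-- `G` is `(k,d)`-colourable: the vertices can be `k`-coloured with every vertex having at most
`d` neighbours of its own colour. -/
def DefColorable (G : SimpleGraph V) (k d : ℕ) : Prop :=
  ∃ c : V → Fin k, ∀ v, {w | G.Adj v w ∧ c w = c v}.ncard ≤ d

/-- `H` is a minor of `G`, via pairwise disjoint connected branch sets. -/
def IsMinor (H : SimpleGraph α) (G : SimpleGraph V) : Prop :=
  ∃ B : α → Set V,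
    (∀ a, (B a).Nonempty) ∧
    (∀ a, (G.induce (B a)).Connected) ∧
    (Pairwise fun a b => Disjoint (B a) (B b)) ∧
    (∀ a b, H.Adj a b → ∃ x ∈ B a, ∃ y ∈ B b, G.Adj x y)

/-- A subdivision of `H` whose path lengths all satisfy `lenOK` occurs as a subgraph of `G`:
the branch vertices are embedded injectively by `f`, each edge of `H` is replaced by a path of
`G` between the corresponding branch vertices, internal vertices of these paths avoid branch
vertices, and distinct paths meet only in common endpoints. -/
def HasSubdivWith (G : SimpleGraph V) (H : SimpleGraph α) (lenOK : ℕ → Prop) : Prop :=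
  ∃ f : α → V, Function.Injective f ∧
    ∃ P : ∀ ⦃a b : α⦄, H.Adj a b → G.Walk (f a) (f b),
      (∀ ⦃a b⦄ (h : H.Adj a b), (P h).IsPath ∧ lenOK (P h).length) ∧
      (∀ ⦃a b⦄ (h : H.Adj a b) (c : α), f c ∈ (P h).support → c = a ∨ c = b) ∧
      (∀ ⦃a b⦄ (h : H.Adj a b) ⦃a' b'⦄ (h' : H.Adj a' b'), s(a, b) ≠ s(a', b') →
        ∀ x ∈ (P h).support, x ∈ (P h').support →
          (x = f a ∨ x = f b) ∧ (x = f a' ∨ x = f b'))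

/-- Some `(≤ k)`-subdivision of `H` (each edge replaced by a path of length at most `k+1`)
is a subgraph of `G`. -/
def HasSubdivLE (G : SimpleGraph V) (k : ℕ) (H : SimpleGraph α) : Prop :=
  HasSubdivWith G H fun L => L ≤ k + 1

/-- `H` is a topological minor of `G`: some subdivision of `H` is a subgraph of `G`. -/
def HasTopMinor (G : SimpleGraph V) (H : SimpleGraph α) : Prop :=
  HasSubdivWith G H fun _ => True

/-- The exact `1`-subdivision of `H`: every edge is subdivided exactly once. -/
def exactOneSubdivision (H : SimpleGraph α) : SimpleGraph (α ⊕ H.edgeSet) :=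
  SimpleGraph.fromRel fun x y =>
    match x, y with
    | Sum.inl a, Sum.inr e => a ∈ (e : Sym2 α)
    | _, _ => False

/-- The graph `K*_{s,t}`: `K_{s,t}` together with `binom s 2` new vertices, each adjacent to a
distinct pair of vertices on the side of size `s`. -/
def KstarGraph (s t : ℕ) :
    SimpleGraph (Fin s ⊕ (Fin t ⊕ {p : Fin s × Fin s // p.1 < p.2})) :=
  SimpleGraph.fromRel fun x y =>
    match x, y with
    | Sum.inl _, Sum.inr (Sum.inl _) => True
    | Sum.inl a, Sum.inr (Sum.inr c) => a = c.1.1 ∨ a = c.1.2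
    | _, _ => False

/-- The auxiliary function `N₁(s,t,δ,δ₁)`. -/
noncomputable def N1 (s t : ℕ) (δ δ₁ : ℝ) : ℝ :=
  if s = 1 then (t : ℝ) - 1
  else if s = 2 then (δ - 2) * δ₁ * t / 2 + δ
  else (δ - s) * ((Nat.choose ⌊δ₁⌋₊ (s - 1) : ℝ) * ((t : ℝ) - 1) + δ₁ / 2) + δ

/-- The maximum average degree of `G`: maximum of `2|E(H)|/|V(H)|` over nonempty subgraphs. -/
noncomputable def mad [Fintype V] (G : SimpleGraph V) : ℝ :=
  sSup {q : ℝ | ∃ H : G.Subgraph, H.verts.Nonempty ∧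
    q = 2 * (H.edgeSet.ncard : ℝ) / (H.verts.ncard : ℝ)}

/-- `∇₀(G)`: maximum of `|E(H)|/|V(H)|` over nonempty subgraphs of `G`. -/
noncomputable def nabla0 [Fintype V] (G : SimpleGraph V) : ℝ :=
  sSup {q : ℝ | ∃ H : G.Subgraph, H.verts.Nonempty ∧
    q = (H.edgeSet.ncard : ℝ) / (H.verts.ncard : ℝ)}

/-- `∇₁(G)`: maximum of `|E(H)|/|V(H)|` over graphs `H` some `(≤2)`-subdivision of which is a
subgraph of `G`. -/
noncomputable def nabla1 [Fintype V] (G : SimpleGraph V) : ℝ :=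
  sSup {q : ℝ | ∃ (n : ℕ) (H : SimpleGraph (Fin n)), 0 < n ∧
    HasSubdivLE G 2 H ∧ q = (H.edgeSet.ncard : ℝ) / (n : ℝ)}

end Defs

/-- The vertex type of the graph `G(s,N)` (here indexed by `t = s - 2`). -/
def GVert : ℕ → ℕ → Type
  | 0, N => Fin (N + 2)
  | t + 1, N => Option (Fin (N + 1) × GVert t N)

/-- The graph `G(s,N)` (indexed by `t = s - 2`): `GGraph 0 N = G(2,N) = K_{1,N+1}`, and
`GGraph (t+1) N = G(t+3,N)` is obtained from `N+1` disjoint copies of `GGraph t N` by adding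
a dominant vertex. -/
def GGraph : (t : ℕ) → (N : ℕ) → SimpleGraph (GVert t N)
  | 0, N => SimpleGraph.fromRel fun i j => i = (0 : Fin (N + 2))
  | t + 1, N => SimpleGraph.fromRel fun x y =>
      match x, y with
      | none, some _ => True
      | some (i, a), some (j, b) => i = j ∧ (GGraph t N).Adj a b
      | _, _ => False

section More

variable {V : Type u} {α : Type v}

/-- `r` is a forest order witnessing that `H` is a subgraph of the closure of a rooted forest:
`r` is a partial order in which the set of ancestors of each vertex is a chain, and adjacent
vertices of `H` are comparable. -/
def IsForestOrder (H : SimpleGraph α) (r : α → α → Prop) : Prop :=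
  IsPartialOrder α r ∧ (∀ v : α, IsChain r {u | r u v}) ∧
    (∀ x y, H.Adj x y → r x y ∨ r y x)

/-- The tree-depth of `H`: the minimum height of a rooted forest whose closure contains `H`
as a subgraph (the height being measured as the maximum number of vertices on a
root--to--leaf path). -/
noncomputable def treeDepth (H : SimpleGraph α) : ℕ :=
  sInf {k | ∃ r : α → α → Prop, IsForestOrder H r ∧ ∀ v, {u | r u v}.ncard ≤ k}

/-- The vertex cover number `τ(H)`. -/
noncomputable def vertexCoverNumber (H : SimpleGraph α) : ℕ :=
  sInf {k | ∃ S : Set α, S.ncard = k ∧ ∀ ⦃x y⦄, H.Adj x y → x ∈ S ∨ y ∈ S}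

/-- The graph obtained from `ℓ` disjoint copies of the star `K_{1,k}` by adding one dominant
vertex. -/
def Hlk (l k : ℕ) : SimpleGraph (Option (Fin l × Fin (k + 1))) :=
  SimpleGraph.fromRel fun x y =>
    match x, y with
    | none, some _ => True
    | some (i, a), some (j, _) => i = j ∧ a = 0
    | _, _ => False

/-- The star `K_{1,k}` together with `m` isolated vertices. -/
def StarPlusIsolated (k m : ℕ) : SimpleGraph (Fin (k + 1) ⊕ Fin m) :=
  SimpleGraph.fromRel fun x y =>
    match x, y with
    | Sum.inl i, Sum.inl _ => i = 0
    | _, _ => False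

/-- `G` admits a `k`-stack layout: a linear ordering of the vertices (given by an injection
into `ℕ`) and an assignment of the edges to `k` stacks so that no two edges in a common stack
cross. -/
def HasStackLayout (G : SimpleGraph V) (k : ℕ) : Prop :=
  ∃ f : V → ℕ, Function.Injective f ∧
    ∃ σ : Sym2 V → Fin k,
      ∀ a b c d : V, G.Adj a b → G.Adj c d → σ s(a, b) = σ s(c, d) →
        ¬(f a < f c ∧ f c < f b ∧ f b < f d)

/-- `G` admits a `k`-queue layout: a linear ordering of the vertices (given by an injection
into `ℕ`) and an assignment of the edges to `k` queues so that no two edges in a common queue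
are nested. -/
def HasQueueLayout (G : SimpleGraph V) (k : ℕ) : Prop :=
  ∃ f : V → ℕ, Function.Injective f ∧
    ∃ σ : Sym2 V → Fin k,
      ∀ a b c d : V, G.Adj a b → G.Adj c d → σ s(a, b) = σ s(c, d) →
        ¬(f a < f c ∧ f c < f d ∧ f d < f b)

end More

section Defective

variable {V : Type u} {α : Type v} {G H : SimpleGraph V} {c : V → α} {d k : ℕ} {e : Sym2 V}
  {v w : V} {x : α}

/-- The set of neighbours of `v` that receive the same colour as `v`; its size is the defect of
`c` at `v`. -/
def monoNeighborSet (G : SimpleGraph V) (c : V → α) (v : V) : Set V :=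
  {w | G.Adj v w ∧ c w = c v}

/-- The colouring `c` of `G` has defect at most `d`. The defect is counted by `Set.ncard`, so an
infinite set of conflicts would count as `0`. -/
def IsDefective (G : SimpleGraph V) (d : ℕ) (c : V → α) : Prop :=
  ∀ v, (monoNeighborSet G c v).ncard ≤ d

/-- Both ends of the pair `e` have degree at most `l` in `G`: for an edge `e` this is the notion of
an `l`-light edge. Degrees are counted by `Set.ncard`, as in the theorem. -/
def IsLight (G : SimpleGraph V) (l : ℕ) (e : Sym2 V) : Prop :=
  ∀ v ∈ e, (G.neighborSet v).ncard ≤ l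

lemma monoNeighborSet_mono (hHG : H ≤ G) : monoNeighborSet H c v ⊆ monoNeighborSet G c v :=
  fun _ hw => ⟨hHG hw.1, hw.2⟩

lemma monoNeighborSet_deleteEdges_of_notMem {s : Set (Sym2 V)} (hs : ∀ e ∈ s, v ∉ e) :
    monoNeighborSet (G.deleteEdges s) c v = monoNeighborSet G c v := by
  ext w
  have hvw : s(v, w) ∉ s := fun h => hs _ h (Sym2.mem_mk_left v w)
  simp only [monoNeighborSet, Set.mem_ofPred_eq, deleteEdges_adj, hvw, not_false_eq_true, and_true]

lemma IsDefective.anti [Finite V] (hHG : H ≤ G) (hG : IsDefective G d c) : IsDefective H d c :=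
  fun v => (Set.ncard_le_ncard (monoNeighborSet_mono hHG)).trans (hG v)

lemma isDefective_bot : IsDefective (⊥ : SimpleGraph V) d c := by
  simp [IsDefective, monoNeighborSet]

lemma monoNeighborSet_update_self [DecidableEq V] (hx : x ∉ c '' G.neighborSet v) :
    monoNeighborSet G (Function.update c v x) v = ∅ := by
  refine Set.eq_empty_of_forall_notMem fun w ⟨hvw, hcw⟩ => hx ⟨w, hvw, ?_⟩
  rwa [Function.update_self, Function.update_of_ne hvw.ne'] at hcw

lemma monoNeighborSet_update_of_ne [DecidableEq V] (hx : x ∉ c '' G.neighborSet v) (hwv : w ≠ v) :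
    monoNeighborSet G (Function.update c v x) w =
      monoNeighborSet (G.deleteIncidenceSet v) c w := by
  ext z
  simp only [monoNeighborSet, Set.mem_ofPred_eq, deleteIncidenceSet_adj,
    Function.update_of_ne hwv]
  rcases eq_or_ne z v with rfl | hzv
  · have hne : G.Adj w z → x ≠ c w := fun hwz hxw => hx ⟨w, hwz.symm, hxw.symm⟩
    simpa using hne
  · simp [hwv, hzv]

lemma IsDefective.update [DecidableEq V] (hc : IsDefective (G.deleteIncidenceSet v) d c)
    (hx : x ∉ c '' G.neighborSet v) : IsDefective G d (Function.update c v x) := by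
  intro w
  rcases eq_or_ne w v with rfl | hwv
  · simp [monoNeighborSet_update_self hx]
  · exact monoNeighborSet_update_of_ne hx hwv ▸ hc w

lemma deleteIncidenceSet_le_deleteEdges_singleton (he : e ∈ G.edgeSet) (hv : v ∈ e) :
    G.deleteIncidenceSet v ≤ G.deleteEdges {e} :=
  deleteEdges_anti (Set.singleton_subset_iff.2 ⟨he, hv⟩)

lemma exists_isDefective_of_deleteEdges [Finite V] {L : V → Finset α} (hL : ∀ w, c w ∈ L w)
    (hc : IsDefective (G.deleteEdges {e}) d c) (he : e ∈ G.edgeSet) (hv : v ∈ e)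
    (hfree : (c '' G.neighborSet v).ncard < (L v).card) :
    ∃ c' : V → α, (∀ w, c' w ∈ L w) ∧ IsDefective G d c' := by
  classical
  obtain ⟨x, hxL, hx⟩ : ∃ x ∈ (L v : Set α), x ∉ c '' G.neighborSet v :=
    Set.exists_mem_notMem_of_ncard_lt_ncard (by rwa [Set.ncard_coe_finset])
  refine ⟨Function.update c v x, fun w => ?_,
    (hc.anti (deleteIncidenceSet_le_deleteEdges_singleton he hv)).update hx⟩
  rcases eq_or_ne w v with rfl | hwv
  · rwa [Function.update_self]
  · rw [Function.update_of_ne hwv]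
    exact hL w

lemma exists_mem_lt_ncard_monoNeighborSet (hc : IsDefective (G.deleteEdges {e}) d c)
    (hcG : ¬ IsDefective G d c) : ∃ v ∈ e, d < (monoNeighborSet G c v).ncard := by
  obtain ⟨v, hv⟩ : ∃ v, d < (monoNeighborSet G c v).ncard := by
    simpa only [IsDefective, not_forall, not_le] using hcG
  refine ⟨v, ?_, hv⟩
  by_contra hve
  have hdel := hc v
  rw [monoNeighborSet_deleteEdges_of_notMem (by simpa using hve)] at hdel
  exact hdel.not_gt hv

lemma ncard_image_add_ncard_fiber_le {β : Type*} {s : Set β} (hs : s.Finite) (f : β → α) (y : α) :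
    (f '' s).ncard + (s ∩ f ⁻¹' {y}).ncard ≤ s.ncard + 1 := by
  have hsub : f '' s ⊆ insert y (f '' (s \ f ⁻¹' {y})) := by
    rintro _ ⟨z, hz, rfl⟩
    exact or_iff_not_imp_left.2 fun hzy => ⟨z, ⟨hz, hzy⟩, rfl⟩
  have himage : (f '' s).ncard ≤ (s \ f ⁻¹' {y}).ncard + 1 :=
    calc (f '' s).ncard
      _ ≤ (insert y (f '' (s \ f ⁻¹' {y}))).ncard :=
        Set.ncard_le_ncard hsub ((hs.sdiff.image f).insert y)
      _ ≤ (f '' (s \ f ⁻¹' {y})).ncard + 1 := Set.ncard_insert_le _ _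
      _ ≤ (s \ f ⁻¹' {y}).ncard + 1 := by gcongr; exact Set.ncard_image_le hs.sdiff
  have hsplit := Set.ncard_inter_add_ncard_sdiff_eq_ncard s (f ⁻¹' {y}) hs
  omega

lemma IsLight.exists_mem_ncard_image_neighborSet_le [Finite V] (he : IsLight G (k + d) e)
    (hc : IsDefective (G.deleteEdges {e}) d c) (hcG : ¬ IsDefective G d c) :
    ∃ v ∈ e, (c '' G.neighborSet v).ncard ≤ k := by
  obtain ⟨v, hve, hv⟩ := exists_mem_lt_ncard_monoNeighborSet hc hcG
  have hdeg : (G.neighborSet v).ncard ≤ k + d := he v hve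
  have hcount : (c '' G.neighborSet v).ncard + (monoNeighborSet G c v).ncard ≤
      (G.neighborSet v).ncard + 1 :=
    ncard_image_add_ncard_fiber_le (Set.toFinite _) c (c v)
  exact ⟨v, hve, by omega⟩

theorem exists_isDefective_of_low_or_light_edge [Finite V] {L : V → Finset α}
    (hL : ∀ v, k < (L v).card)
    (hG : ∀ H ≤ G, H ≠ ⊥ →
      ∃ e ∈ H.edgeSet, (∃ v ∈ e, (H.neighborSet v).ncard ≤ k) ∨ IsLight H (k + d) e) :
    ∃ c : V → α, (∀ v, c v ∈ L v) ∧ IsDefective G d c := by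
  induction G using WellFoundedLT.induction with
  | ind G ih =>
  rcases eq_or_ne G ⊥ with rfl | hbot
  · choose c hc using fun v => Finset.card_pos.1 ((Nat.zero_le k).trans_lt (hL v))
    exact ⟨c, hc, isDefective_bot⟩
  obtain ⟨e, he, hlow_or_light⟩ := hG G le_rfl hbot
  have hle : G.deleteEdges {e} ≤ G := deleteEdges_le _
  have hlt : G.deleteEdges {e} < G := hle.lt_of_ne (by simpa using he)
  obtain ⟨c, hcL, hc⟩ := ih _ hlt fun H hH => hG H (hH.trans hle)
  by_cases hcG : IsDefective G d c
  · exact ⟨c, hcL, hcG⟩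
  obtain ⟨v, hve, hv⟩ : ∃ v ∈ e, (c '' G.neighborSet v).ncard ≤ k := by
    rcases hlow_or_light with ⟨v, hve, hdeg⟩ | hlight
    · exact ⟨v, hve, (Set.ncard_image_le (Set.toFinite _)).trans hdeg⟩
    · exact hlight.exists_mem_ncard_image_neighborSet_le hc hcG
  exact exists_isDefective_of_deleteEdges hcL hc he hve (hv.trans_lt (hL v))

/-- The graph `H ≤ G` with its isolated vertices removed, as a `Subgraph` of `G`. Every vertex of it
thus lies on an edge, in particular a vertex of low degree. -/
def supportSubgraph (hHG : H ≤ G) : G.Subgraph where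
  verts := H.support
  Adj := H.Adj
  adj_sub h := hHG h
  edge_vert h := h.mem_support_left
  symm := H.symm

end Defective

/-- For integers `ℓ ≥ k ≥ 1`, if every (nonempty) subgraph `H` of a finite simple graph `G`
has a vertex of degree at most `k` or an `ℓ`-light edge, then `G` is `(k+1, ℓ-k)`-choosable. -/
theorem stmt0 {V : Type} [Fintype V] (G : SimpleGraph V) (k l : ℕ)
    (hk : 1 ≤ k) (hkl : k ≤ l)
    (h : ∀ H : G.Subgraph, H.verts.Nonempty →
      (∃ v ∈ H.verts, {w | H.Adj v w}.ncard ≤ k) ∨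
      (∃ u v, H.Adj u v ∧ {w | H.Adj u w}.ncard ≤ l ∧ {w | H.Adj v w}.ncard ≤ l)) :
    Choosable G (k + 1) ((l : ℤ) - (k : ℤ)) := by
  obtain ⟨d, rfl⟩ := Nat.exists_eq_add_of_le hkl
  intro L hL
  have hedge : ∀ H ≤ G, H ≠ ⊥ →
      ∃ e ∈ H.edgeSet, (∃ v ∈ e, (H.neighborSet v).ncard ≤ k) ∨ IsLight H (k + d) e := by
    intro H hHG hbot
    have hne : (supportSubgraph hHG).verts.Nonempty :=
      Set.nonempty_iff_ne_empty.2 ((support_eq_bot_iff H).not.2 hbot)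
    rcases h (supportSubgraph hHG) hne with ⟨v, ⟨w, hvw⟩, hv⟩ | ⟨u, v, huv, hu, hv⟩
    · exact ⟨s(v, w), hvw, Or.inl ⟨v, Sym2.mem_mk_left v w, hv⟩⟩
    · exact ⟨s(u, v), huv, Or.inr (Sym2.ball.2 ⟨hu, hv⟩)⟩
  obtain ⟨c, hcL, hc⟩ :=
    exists_isDefective_of_low_or_light_edge (fun v => k.lt_succ_self.trans_eq (hL v).symm) hedge
  refine ⟨c, hcL, fun v => ?_⟩
  rw [Nat.cast_add, add_sub_cancel_left]
  exact_mod_cast hc v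
end

section
/- Let s, t be positive integers and δ, δ₁ positive reals, and let ℓ = ⌊N₁(s,t,δ,δ₁)⌋. If G is a finite simple graph with at least one vertex such that every subgraph of G has average degree at most δ, and every graph whose exact 1-subdivision is a subgraph of G has average degree at most δ₁, then at least one of the following holds: (i) G contains K*_{s,t} as a subgraph; (ii) G has a vertex of degree at most s−1; (iii) G has an ℓ-light edge. -/
/-!
Suppose that all degrees are at least `s` and that no edge is `⌊N₁⌋`-light, so that the set `A` of
vertices of degree at most `N₁` is independent and its complement `B` is nonempty. If `s = 1`, a
vertex of `B` has at least `t` neighbours, which is a `K*_{1,t}`.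

Let `s ≥ 2` and write `N₁ = (δ - s) C + δ`. Comparing the degree sum of `G` with the bound on its
average degree gives `|A| > C |B|`. Let `H` be a maximal graph whose edges can be assigned distinct
vertices of `A`, each adjacent in `G` to both ends of its edge. Then `H` lives on `B`, and `G`
contains the exact 1-subdivision of every induced subgraph of `H`, so all of these have average
degree at most `δ₁`. By maximality, the neighbourhood of each unassigned vertex of `A` is a clique
of `H`. At most `|E(H)| ≤ δ₁ |B| / 2` vertices of `A` are assigned, and `H` has at most `|E(H)|`
cliques of size `s = 2`, and at most `binom ⌊δ₁⌋ (s - 1) |B|` of any size `s` because it is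
`⌊δ₁⌋`-degenerate. The constant `C` is such that, by the pigeonhole principle, some `s`-clique
of `H` has `t` unassigned vertices adjacent to all of it. Together with the vertices assigned to
the edges of the clique, they form a `K*_{s,t}`.
-/

open SimpleGraph

universe u v

open Function Finset

/-! ### Embedding subdivisions and `K*_{s,t}` -/

section Embedding

variable {V : Type*} {G : SimpleGraph V}

theorem containsSubgraph_fromRel {α : Type*} {r : α → α → Prop} {f : α → V} (hf : Injective f)
    (hr : ∀ x y, r x y → G.Adj (f x) (f y)) : ContainsSubgraph G (SimpleGraph.fromRel r) :=
  ⟨⟨f, fun h => ((SimpleGraph.fromRel_adj ..).1 h).2.elim (hr _ _) fun h => (hr _ _ h).symm⟩, hf⟩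

theorem containsSubgraph_exactOneSubdivision_of_injective {α : Type*} {H : SimpleGraph α}
    {f : α → V} {g : H.edgeSet → V} (hinj : Injective (Sum.elim f g))
    (hadj : ∀ e : H.edgeSet, ∀ x ∈ (e : Sym2 α), G.Adj (f x) (g e)) :
    ContainsSubgraph G (exactOneSubdivision H) := by
  refine containsSubgraph_fromRel hinj ?_
  rintro (x | _) (_ | e) h
  case inl.inr => exact hadj e x h
  all_goals exact h.elim

theorem containsSubgraph_KstarGraph_of_injective {s t : ℕ} {a : Fin s → V} {b : Fin t → V}
    {c : {p : Fin s × Fin s // p.1 < p.2} → V} (hinj : Injective (Sum.elim a (Sum.elim b c)))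
    (hab : ∀ i j, G.Adj (a i) (b j)) (hac : ∀ p, ∀ i ∈ s(p.1.1, p.1.2), G.Adj (a i) (c p)) :
    ContainsSubgraph G (KstarGraph s t) := by
  refine containsSubgraph_fromRel hinj ?_
  rintro (i | _) (_ | _ | p) h
  case inl.inr.inl => exact hab i _
  case inl.inr.inr => exact hac p i (Sym2.mem_iff.2 h)
  all_goals exact h.elim

theorem containsSubgraph_KstarGraph_one [Fintype V] [DecidableRel G.Adj] {t : ℕ} {v : V}
    (hv : t ≤ G.degree v) : ContainsSubgraph G (KstarGraph 1 t) := by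
  let b : Fin t → V := fun j => (G.neighborFinset v).equivFin.symm (Fin.castLE hv j)
  have hb : ∀ j, G.Adj v (b j) := fun j => by
    simpa only [mem_neighborFinset] using
      ((G.neighborFinset v).equivFin.symm (Fin.castLE hv j)).2
  have hb_inj : Injective b :=
    Subtype.val_injective.comp <| (Equiv.injective _).comp <| Fin.castLE_injective hv
  have : IsEmpty {p : Fin 1 × Fin 1 // p.1 < p.2} :=
    ⟨fun p => p.2.ne (Subsingleton.elim _ _)⟩
  refine containsSubgraph_KstarGraph_of_injective (a := fun _ => v) (b := b) (c := isEmptyElim)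
    ?_ (fun _ => hb) (fun p => isEmptyElim p)
  exact (injective_of_subsingleton _).sumElim
    (hb_inj.sumElim (injective_of_subsingleton _) fun _ p => isEmptyElim p)
    (by rintro _ (j | p); exacts [(hb j).ne, isEmptyElim p])

end Embedding

/-! ### Subdividing maps -/

/-- `φ` places distinct vertices of `A` on the edges of `H`, so that `G` contains the
1-subdivision of `H` whose subdivision vertices are the `φ e`, except that the ends of the edges
of `H` might themselves lie in `A`; this is excluded once `A` is independent in `G`. The values of
`φ` outside `H.edgeSet` are irrelevant. -/
structure IsSubdividingMap {V : Type*} (G : SimpleGraph V) (A : Set V) (H : SimpleGraph V)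
    (φ : Sym2 V → V) : Prop where
  mapsTo : Set.MapsTo φ H.edgeSet A
  injOn : Set.InjOn φ H.edgeSet
  adj : ∀ e ∈ H.edgeSet, ∀ x ∈ e, G.Adj x (φ e)

namespace IsSubdividingMap

variable {V : Type*} {G H : SimpleGraph V} {A : Set V} {φ : Sym2 V → V}

theorem bot (φ : Sym2 V → V) : IsSubdividingMap G A ⊥ φ :=
  ⟨by simp [Set.MapsTo], by simp, by simp⟩

theorem support_subset_compl (h : IsSubdividingMap G A H φ) (hA : G.IsIndepSet A) :
    H.support ⊆ Aᶜ := by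
  rintro x ⟨y, hxy⟩ hxA
  have hadj := h.adj s(x, y) hxy x (Sym2.mem_mk_left x y)
  exact hA hxA (h.mapsTo hxy) hadj.ne hadj

theorem sup_edge [DecidableEq V] (h : IsSubdividingMap G A H φ) {v x y : V} (hvA : v ∈ A)
    (hvφ : v ∉ φ '' H.edgeSet) (hxv : G.Adj x v) (hyv : G.Adj y v) (hxy : ¬ H.Adj x y) :
    IsSubdividingMap G A (H ⊔ edge x y) (update φ s(x, y) v) := by
  have mem_edgeSet_sup : ∀ e ∈ (H ⊔ edge x y).edgeSet, e ∈ H.edgeSet ∨ e = s(x, y) := fun e he =>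
    (edgeSet_sup H (edge x y) ▸ he).imp_right fun he => edgeSet_edge_subset he
  have update_old : ∀ e ∈ H.edgeSet, update φ s(x, y) v e = φ e := fun e he =>
    update_of_ne (by rintro rfl; exact hxy he) _ _
  have update_new : update φ s(x, y) v s(x, y) = v := update_self ..
  refine ⟨fun e he => ?_, fun e he e' he' hee' => ?_, fun e he z hz => ?_⟩
  · rcases mem_edgeSet_sup e he with he | rfl
    · exact update_old e he ▸ h.mapsTo he
    · exact update_new.symm ▸ hvA
  · rcases mem_edgeSet_sup e he with he | rfl <;> rcases mem_edgeSet_sup e' he' with he' | rfl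
    · rw [update_old e he, update_old e' he'] at hee'
      exact h.injOn he he' hee'
    · rw [update_old e he, update_new] at hee'
      exact absurd ⟨e, he, hee'⟩ hvφ
    · rw [update_old e' he', update_new] at hee'
      exact absurd ⟨e', he', hee'.symm⟩ hvφ
    · rfl
  · rcases mem_edgeSet_sup e he with he | rfl
    · exact update_old e he ▸ h.adj e he z hz
    · rw [update_new]
      rcases Sym2.mem_iff.1 hz with rfl | rfl
      exacts [hxv, hyv]

theorem exists_forall_isClique_neighborSet [Finite V] [Nonempty V] (G : SimpleGraph V)
    (A : Set V) :
    ∃ H φ, IsSubdividingMap G A H φ ∧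
      ∀ v ∈ A, v ∉ φ '' H.edgeSet → H.IsClique (G.neighborSet v) := by
  classical
  obtain ⟨H, ⟨φ, h⟩, hmax⟩ := (Set.toFinite {H | ∃ φ, IsSubdividingMap G A H φ}).exists_maximal
    ⟨⊥, fun _ => Classical.arbitrary V, bot _⟩
  -- An unassigned vertex with two neighbours not adjacent in `H` could be placed on that new edge.
  refine ⟨H, φ, h, fun v hvA hvφ x hx y hy hne => ?_⟩
  by_contra hxy
  have hle := hmax ⟨_, h.sup_edge hvA hvφ (G.adj_symm hx) (G.adj_symm hy) hxy⟩ le_sup_left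
  exact (lt_sup_edge H x y hne hxy).not_ge hle

theorem containsSubgraph_exactOneSubdivision_comap (h : IsSubdividingMap G A H φ) {α : Type*}
    (f : α ↪ V) (hf : ∀ a, f a ∉ A) :
    ContainsSubgraph G (exactOneSubdivision (H.comap f)) := by
  have hmem : ∀ e : (H.comap f).edgeSet, Sym2.map f e ∈ H.edgeSet := by
    rintro ⟨⟨x, y⟩, he⟩
    exact he
  refine containsSubgraph_exactOneSubdivision_of_injective (f := f)
    (g := fun e => φ (Sym2.map f e)) (f.injective.sumElim (fun e e' hee' => ?_) fun a e hae => ?_)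
    fun e x hx => h.adj _ (hmem e) _ (Sym2.mem_map.2 ⟨x, hx, rfl⟩)
  · exact Subtype.ext <| Sym2.map.injective f.injective <| h.injOn (hmem e) (hmem e') hee'
  · exact hf a (hae ▸ h.mapsTo (hmem e))

theorem two_mul_ncard_edgeSet_induce_le (h : IsSubdividingMap G A H φ) {δ₁ : ℝ}
    (hsub : ∀ (n : ℕ) (H : SimpleGraph (Fin n)), 0 < n →
      ContainsSubgraph G (exactOneSubdivision H) → 2 * (H.edgeSet.ncard : ℝ) ≤ δ₁ * (n : ℝ))
    {B : Finset V} (hB : B.Nonempty) (hBA : ∀ v ∈ B, v ∉ A) :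
    2 * ((H.induce (B : Set V)).edgeSet.ncard : ℝ) ≤ δ₁ * #B := by
  classical
  let f : Fin #B ↪ V := B.equivFin.symm.toEmbedding.trans (Embedding.subtype (· ∈ B))
  have hcomap : H.comap f ≃g H.induce (B : Set V) :=
    Iso.comap B.equivFin.symm (H.induce (B : Set V))
  have hcard : (H.induce (B : Set V)).edgeSet.ncard = (H.comap f).edgeSet.ncard := by
    simpa only [Nat.card_coe_set_eq] using Nat.card_congr hcomap.symm.mapEdgeSet
  rw [hcard]
  exact hsub _ _ hB.card_pos <| h.containsSubgraph_exactOneSubdivision_comap f fun i =>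
    hBA _ (B.equivFin.symm i).2

theorem containsSubgraph_KstarGraph (h : IsSubdividingMap G A H φ) {S T : Finset V}
    (hS : H.IsClique (S : Set V)) (hSA : ∀ x ∈ S, x ∉ A) (hTφ : ∀ v ∈ T, v ∉ φ '' H.edgeSet)
    (hST : ∀ x ∈ S, ∀ v ∈ T, G.Adj x v) : ContainsSubgraph G (KstarGraph #S #T) := by
  let a : Fin #S ↪ V := S.equivFin.symm.toEmbedding.trans (Embedding.subtype (· ∈ S))
  let b : Fin #T ↪ V := T.equivFin.symm.toEmbedding.trans (Embedding.subtype (· ∈ T))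
  let pair : {p : Fin #S × Fin #S // p.1 < p.2} → Sym2 (Fin #S) := fun p => s(p.1.1, p.1.2)
  have ha : ∀ i, a i ∈ S := fun i => (S.equivFin.symm i).2
  have hb : ∀ j, b j ∈ T := fun j => (T.equivFin.symm j).2
  have pair_injective : Injective pair := by
    rintro ⟨⟨i, j⟩, hij⟩ ⟨⟨i', j'⟩, hij'⟩ hp
    rcases Sym2.eq_iff.1 hp with ⟨hi, hj⟩ | ⟨hi, hj⟩
    · exact Subtype.ext (Prod.ext hi hj)
    · exact absurd (hi ▸ hj ▸ hij) hij'.not_gt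
  have hedge : ∀ p, (pair p).map a ∈ H.edgeSet := fun p =>
    hS (ha _) (ha _) (a.injective.ne p.2.ne)
  refine containsSubgraph_KstarGraph_of_injective (a := a) (b := b)
    (c := fun p => φ ((pair p).map a)) (a.injective.sumElim (b.injective.sumElim ?_ ?_) ?_)
    (fun i j => hST _ (ha i) _ (hb j))
    (fun p i hi => h.adj _ (hedge p) _ (Sym2.mem_map.2 ⟨i, hi, rfl⟩))
  · exact fun p q hpq => pair_injective <| Sym2.map.injective a.injective <|
      h.injOn (hedge p) (hedge q) hpq
  · exact fun j p hjp => hTφ _ (hb j) ⟨_, hedge p, hjp.symm⟩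
  · rintro i (j | p) hi
    · exact (hST _ (ha i) _ (hb j)).ne hi
    · exact hSA _ (ha i) (hi ▸ h.mapsTo (hedge p))

end IsSubdividingMap

/-! ### Cliques in sparse graphs -/

section Cliques

variable {V : Type*} (H : SimpleGraph V) [DecidableRel H.Adj]

theorem degree_induce_eq_card_filter {B : Finset V} (v : (B : Set V)) :
    (H.induce (B : Set V)).degree v = #{w ∈ B | H.Adj v w} := by
  rw [← card_neighborFinset_eq_degree, ← card_map (.subtype (· ∈ (B : Set V)))]
  congr 1
  ext w
  simp [and_comm]

variable [Fintype V]

theorem exists_degree_le_floor [Nonempty V] {δ : ℝ}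
    (hH : 2 * (H.edgeSet.ncard : ℝ) ≤ δ * Fintype.card V) : ∃ v, H.degree v ≤ ⌊δ⌋₊ := by
  have hsum : ∑ v, (H.degree v : ℝ) ≤ ∑ _v : V, δ := by
    rw [← Nat.cast_sum, H.sum_degrees_eq_twice_card_edges, ← Set.ncard_coe_finset, coe_edgeFinset,
      sum_const, card_univ, nsmul_eq_mul, mul_comm _ δ]
    exact_mod_cast hH
  obtain ⟨v, -, hv⟩ := exists_le_of_sum_le univ_nonempty hsum
  exact ⟨v, Nat.le_floor hv⟩

variable [DecidableEq V]

theorem card_cliqueFinset_subset_mem_le {B : Finset V} {v : V} (k : ℕ) :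
    #{S ∈ H.cliqueFinset (k + 1) | S ⊆ B ∧ v ∈ S} ≤ (#{w ∈ B | H.Adj v w}).choose k := by
  rw [← card_powersetCard]
  refine card_le_card_of_injOn (·.erase v) (fun S hS => ?_) fun S hS T hT hST => ?_
  · obtain ⟨hSmem, hSB, hvS⟩ := by simpa only [coe_filter, Set.mem_ofPred_eq] using hS
    obtain ⟨hSclique, hScard⟩ := mem_cliqueFinset_iff.1 hSmem
    refine mem_powersetCard.2 ⟨fun x hx => ?_, by rw [card_erase_of_mem hvS, hScard]; rfl⟩
    obtain ⟨hxv, hxS⟩ := mem_erase.1 hx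
    exact mem_filter.2 ⟨hSB hxS, hSclique hvS hxS hxv.symm⟩
  · rw [← insert_erase (mem_filter.1 hS).2.2, ← insert_erase (mem_filter.1 hT).2.2]
    exact congrArg (insert v) hST

-- Repeatedly delete a vertex with at most `d` remaining neighbours, and count each clique when the
-- first of its vertices is deleted.
theorem card_cliqueFinset_subset_le_of_degenerate {d : ℕ} (k : ℕ) {B : Finset V}
    (hdeg : ∀ B' ⊆ B, B'.Nonempty → ∃ v ∈ B', #{w ∈ B' | H.Adj v w} ≤ d) :
    #{S ∈ H.cliqueFinset (k + 1) | S ⊆ B} ≤ #B * d.choose k := by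
  induction B using Finset.strongInduction with
  | H B ih =>
  rcases B.eq_empty_or_nonempty with rfl | hB
  · rw [card_empty, zero_mul, Nat.le_zero, card_eq_zero, filter_eq_empty_iff]
    rintro S hS hSempty
    rw [subset_empty.1 hSempty, mem_cliqueFinset_iff] at hS
    exact absurd hS.card_eq (Nat.succ_ne_zero k).symm
  obtain ⟨v, hvB, hvd⟩ := hdeg B subset_rfl hB
  have hsplit : {S ∈ H.cliqueFinset (k + 1) | S ⊆ B} ⊆
      {S ∈ H.cliqueFinset (k + 1) | S ⊆ B.erase v} ∪
        {S ∈ H.cliqueFinset (k + 1) | S ⊆ B ∧ v ∈ S} := by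
    grind
  calc
    _ ≤ #{S ∈ H.cliqueFinset (k + 1) | S ⊆ B.erase v} +
          #{S ∈ H.cliqueFinset (k + 1) | S ⊆ B ∧ v ∈ S} :=
      (card_le_card hsplit).trans (card_union_le _ _)
    _ ≤ #(B.erase v) * d.choose k + d.choose k :=
      add_le_add
        (ih _ (erase_ssubset hvB) fun B' hB' => hdeg B' (hB'.trans (erase_subset _ _)))
        ((card_cliqueFinset_subset_mem_le H k).trans (Nat.choose_le_choose _ hvd))
    _ = #B * d.choose k := by rw [← Nat.succ_mul, Nat.succ_eq_add_one, card_erase_add_one hvB]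

theorem card_cliqueFinset_two_le : #(H.cliqueFinset 2) ≤ #H.edgeFinset := by
  refine (card_le_card (t := H.edgeFinset.image Sym2.toFinset) fun S hS => ?_).trans card_image_le
  obtain ⟨hS, hcard⟩ := mem_cliqueFinset_iff.1 hS
  obtain ⟨x, y, hxy, rfl⟩ := card_eq_two.1 hcard
  exact mem_image.2 ⟨s(x, y), mem_edgeFinset.2 (hS (by simp) (by simp) hxy), Sym2.toFinset_mk_eq⟩

end Cliques

/-! ### Counting low-degree vertices -/

/-- The constant `C` with `N₁(s,t,δ,δ₁) = (δ - s) C + δ` for `s ≥ 2`. Each vertex of high degree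
accounts for at most `C` vertices of low degree unless there is a `K*_{s,t}`. -/
noncomputable def lowDegreeRatio (s t : ℕ) (δ₁ : ℝ) : ℝ :=
  if s = 2 then δ₁ * t / 2 else (⌊δ₁⌋₊.choose (s - 1) : ℝ) * ((t : ℝ) - 1) + δ₁ / 2

theorem N1_eq_mul_lowDegreeRatio_add {s : ℕ} (hs : s ≠ 1) (t : ℕ) (δ δ₁ : ℝ) :
    N1 s t δ δ₁ = (δ - s) * lowDegreeRatio s t δ₁ + δ := by
  rw [N1, lowDegreeRatio, if_neg hs]
  split_ifs with h2
  · subst h2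
    push_cast
    ring
  · rfl

section Counting

variable {V : Type*} [Fintype V] [DecidableEq V]

theorem card_cliques_mul_add_card_edges_le (H : SimpleGraph V) [DecidableRel H.Adj] {s t : ℕ}
    (hs : 2 ≤ s) (ht : 1 ≤ t) {δ₁ : ℝ} {B : Finset V} (hB : B.Nonempty)
    (hsupp : H.support ⊆ B)
    (hH : ∀ B' ⊆ B, B'.Nonempty →
      2 * ((H.induce (B' : Set V)).edgeSet.ncard : ℝ) ≤ δ₁ * #B') :
    (#{S ∈ H.cliqueFinset s | S ⊆ B} : ℝ) * ((t : ℝ) - 1) + #H.edgeFinset ≤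
      lowDegreeRatio s t δ₁ * #B := by
  have ht' : (0 : ℝ) ≤ (t : ℝ) - 1 := sub_nonneg.2 (by exact_mod_cast ht)
  have hedges : 2 * (#H.edgeFinset : ℝ) ≤ δ₁ * #B := by
    rw [← card_edgeFinset_induce_of_support_subset hsupp, ← Set.ncard_coe_finset, coe_edgeFinset]
    exact hH B subset_rfl hB
  rw [lowDegreeRatio]
  split_ifs with h2
  · subst h2
    have hcliques : (#{S ∈ H.cliqueFinset 2 | S ⊆ B} : ℝ) ≤ #H.edgeFinset := by
      exact_mod_cast (card_filter_le _ _).trans (card_cliqueFinset_two_le H)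
    calc
      _ ≤ (#H.edgeFinset : ℝ) * ((t : ℝ) - 1) + #H.edgeFinset := by gcongr
      _ = 2 * (#H.edgeFinset : ℝ) * (t / 2) := by ring
      _ ≤ δ₁ * #B * (t / 2) := by gcongr
      _ = δ₁ * t / 2 * #B := by ring
  · obtain ⟨k, rfl⟩ : ∃ k, s = k + 1 := ⟨s - 1, by omega⟩
    have hdegenerate : ∀ B' ⊆ B, B'.Nonempty → ∃ v ∈ B', #{w ∈ B' | H.Adj v w} ≤ ⌊δ₁⌋₊ := by
      intro B' hB' hne
      have : Nonempty (B' : Set V) := hne.to_subtype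
      obtain ⟨v, hv⟩ := exists_degree_le_floor (H.induce (B' : Set V)) (δ := δ₁)
        (by simpa using hH B' hB' hne)
      exact ⟨v, v.2, degree_induce_eq_card_filter H v ▸ hv⟩
    have hcliques : (#{S ∈ H.cliqueFinset (k + 1) | S ⊆ B} : ℝ) ≤ #B * ⌊δ₁⌋₊.choose k := by
      exact_mod_cast card_cliqueFinset_subset_le_of_degenerate H k hdegenerate
    calc
      _ ≤ (#B * ⌊δ₁⌋₊.choose k : ℝ) * ((t : ℝ) - 1) + δ₁ * #B / 2 := by gcongr; linarith
      _ = _ := by rw [Nat.add_sub_cancel]; ring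

theorem mul_card_compl_lt_card {A : Finset V} (hA : Aᶜ.Nonempty) {d : V → ℝ} {s δ C : ℝ}
    (hmin : ∀ v, s ≤ d v) (hsum : ∑ v, d v ≤ δ * Fintype.card V)
    (hlarge : ∀ v ∉ A, (δ - s) * C + δ < d v) : C * #Aᶜ < #A := by
  have hcard : (Fintype.card V : ℝ) = #A + #Aᶜ := by exact_mod_cast (card_add_card_compl A).symm
  have hs : s * Fintype.card V ≤ ∑ v, d v := by
    simpa [mul_comm] using card_nsmul_le_sum univ d s fun v _ => hmin v
  have hlow : s * #A ≤ ∑ v ∈ A, d v := by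
    simpa [mul_comm] using card_nsmul_le_sum A d s fun v _ => hmin v
  have hhigh : ((δ - s) * C + δ) * #Aᶜ < ∑ v ∈ Aᶜ, d v := by
    have := sum_lt_sum_of_nonempty hA fun v hv => hlarge v (mem_compl.1 hv)
    rwa [sum_const, nsmul_eq_mul, mul_comm] at this
  have hsδ : s ≤ δ := le_of_mul_le_mul_right (hs.trans hsum) <| by
    exact_mod_cast hA.card_pos.trans_le (card_le_univ _)
  refine lt_of_mul_lt_mul_left ?_ (sub_nonneg.2 hsδ)
  rw [← sum_add_sum_compl A, hcard] at hsum
  linarith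

theorem IsSubdividingMap.containsSubgraph_KstarGraph_of_card_lt {G H : SimpleGraph V}
    [DecidableRel G.Adj] [DecidableRel H.Adj] {A : Finset V} {φ : Sym2 V → V}
    (h : IsSubdividingMap G A H φ) (hA : G.IsIndepSet A)
    (hclique : ∀ v ∈ A, v ∉ φ '' H.edgeSet → H.IsClique (G.neighborSet v)) {s t : ℕ}
    (hdeg : ∀ v ∈ A, s ≤ G.degree v)
    (hcard : #{S ∈ H.cliqueFinset s | S ⊆ Aᶜ} * (t - 1) + #H.edgeFinset < #A) :
    ContainsSubgraph G (KstarGraph s t) := by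
  have exists_nbrs : ∀ v, ∃ N ⊆ G.neighborFinset v, v ∈ A → #N = s := fun v => by
    by_cases hv : v ∈ A
    · obtain ⟨N, hN, hNs⟩ := exists_subset_card_eq (hdeg v hv)
      exact ⟨N, hN, fun _ => hNs⟩
    · exact ⟨∅, empty_subset _, fun hvA => absurd hvA hv⟩
  choose N hN hNcard using exists_nbrs
  have hNadj : ∀ v, ∀ x ∈ N v, G.Adj v x := fun v x hx => (mem_neighborFinset _ _ _).1 (hN v hx)
  let R := A \ H.edgeFinset.image φ
  have mem_R : ∀ v ∈ R, v ∈ A ∧ v ∉ φ '' H.edgeSet := fun v hv => by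
    simpa only [R, mem_sdiff, mem_image, mem_edgeFinset, Set.mem_image] using hv
  have hNR : ∀ v ∈ R, N v ∈ ({S ∈ H.cliqueFinset s | S ⊆ Aᶜ} : Finset _) := fun v hv => by
    obtain ⟨hvA, hvφ⟩ := mem_R v hv
    refine mem_filter.2 ⟨mem_cliqueFinset_iff.2 ⟨?_, hNcard v hvA⟩, fun x hx => ?_⟩
    · exact (hclique v hvA hvφ).subset (hNadj v)
    · exact mem_compl.2 fun hxA => hA hvA hxA (hNadj v x hx).ne (hNadj v x hx)
  have hR : #{S ∈ H.cliqueFinset s | S ⊆ Aᶜ} * (t - 1) < #R := by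
    have := le_card_sdiff (H.edgeFinset.image φ) A
    have := card_image_le (s := H.edgeFinset) (f := φ)
    lia
  obtain ⟨S, hS, hfiber⟩ := exists_lt_card_fiber_of_mul_lt_card_of_maps_to hNR hR
  obtain ⟨T, hTsub, rfl⟩ := exists_subset_card_eq (Nat.le_of_pred_lt hfiber)
  have hT : ∀ v ∈ T, v ∈ R ∧ N v = S := fun v hv => mem_filter.1 (hTsub hv)
  obtain ⟨hS, hSA⟩ := mem_filter.1 hS
  obtain ⟨hSclique, rfl⟩ := mem_cliqueFinset_iff.1 hS
  exact h.containsSubgraph_KstarGraph hSclique (fun x hx => mem_compl.1 (hSA hx))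
    (fun v hv => (mem_R v (hT v hv).1).2)
    fun x hx v hv => (hNadj v x ((hT v hv).2 ▸ hx)).symm

end Counting

/-! ### Light edges -/

section LightEdges

variable {V : Type*} [Fintype V] [Nonempty V] {G : SimpleGraph V} [DecidableRel G.Adj]

theorem exists_notMem_of_isIndepSet {A : Set V} (hA : G.IsIndepSet A)
    (hdeg : ∀ v, 0 < G.degree v) : ∃ v, v ∉ A := by
  by_contra! hmem
  obtain ⟨w, hw⟩ := (G.degree_pos_iff_exists_adj (Classical.arbitrary V)).1 (hdeg _)
  exact hA (hmem _) (hmem w) hw.ne hw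

theorem containsSubgraph_KstarGraph_one_of_isIndepSet {t : ℕ} (hmin : ∀ v, 1 ≤ G.degree v)
    (hlow : G.IsIndepSet {v | G.degree v < t}) : ContainsSubgraph G (KstarGraph 1 t) := by
  obtain ⟨v, hv⟩ := exists_notMem_of_isIndepSet hlow hmin
  exact containsSubgraph_KstarGraph_one (not_lt.1 hv)

theorem containsSubgraph_KstarGraph_of_isIndepSet {s t : ℕ} (hs : 2 ≤ s) (ht : 1 ≤ t)
    {δ δ₁ : ℝ} (havg : 2 * (G.edgeSet.ncard : ℝ) ≤ δ * Fintype.card V)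
    (hsub : ∀ (n : ℕ) (H : SimpleGraph (Fin n)), 0 < n →
      ContainsSubgraph G (exactOneSubdivision H) → 2 * (H.edgeSet.ncard : ℝ) ≤ δ₁ * (n : ℝ))
    (hmin : ∀ v, s ≤ G.degree v)
    (hlow : G.IsIndepSet {v | (G.degree v : ℝ) ≤ N1 s t δ δ₁}) :
    ContainsSubgraph G (KstarGraph s t) := by
  classical
  obtain ⟨A, hA⟩ := (Set.toFinite {v | (G.degree v : ℝ) ≤ N1 s t δ δ₁}).exists_finset_coe
  rw [← hA] at hlow
  obtain ⟨u, hu⟩ := exists_notMem_of_isIndepSet hlow fun v => by linarith [hmin v]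
  have hAc : Aᶜ.Nonempty := ⟨u, mem_compl.2 hu⟩
  have hhigh : ∀ v ∉ A, (δ - s) * lowDegreeRatio s t δ₁ + δ < G.degree v := fun v hv => by
    rw [← N1_eq_mul_lowDegreeRatio_add (by omega)]
    exact not_le.1 fun hle => hv (hA.symm.subset hle)
  have hsum : ∑ v, (G.degree v : ℝ) ≤ δ * Fintype.card V := by
    rwa [← Nat.cast_sum, G.sum_degrees_eq_twice_card_edges, ← Set.ncard_coe_finset,
      coe_edgeFinset, Nat.cast_mul, Nat.cast_two]
  have hratio : lowDegreeRatio s t δ₁ * #Aᶜ < #A :=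
    mul_card_compl_lt_card hAc (fun v => by exact_mod_cast hmin v) hsum hhigh
  obtain ⟨H, φ, h, hclique⟩ := IsSubdividingMap.exists_forall_isClique_neighborSet G A
  have hcount := card_cliques_mul_add_card_edges_le H hs ht hAc
    (by simpa using h.support_subset_compl hlow)
    fun B hB hne => h.two_mul_ncard_edgeSet_induce_le hsub hne fun v hv => mem_compl.1 (hB hv)
  refine h.containsSubgraph_KstarGraph_of_card_lt hlow hclique (fun v _ => hmin v) ?_
  rw [← Nat.cast_lt (α := ℝ)]
  push_cast [ht]
  exact hcount.trans_lt hratio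

end LightEdges

theorem stmt1_general {V : Type*} [Finite V] [Nonempty V] (G : SimpleGraph V)
    (s t : ℕ) (hs : 1 ≤ s) (ht : 1 ≤ t) (δ δ₁ : ℝ)
    (havg : 2 * (G.edgeSet.ncard : ℝ) ≤ δ * Nat.card V)
    (hsub : ∀ (n : ℕ) (H : SimpleGraph (Fin n)), 0 < n →
      ContainsSubgraph G (exactOneSubdivision H) → 2 * (H.edgeSet.ncard : ℝ) ≤ δ₁ * (n : ℝ)) :
    ContainsSubgraph G (KstarGraph s t) ∨
    (∃ v : V, {w | G.Adj v w}.ncard ≤ s - 1) ∨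
    (∃ u v : V, G.Adj u v ∧ ({w | G.Adj u w}.ncard : ℤ) ≤ ⌊N1 s t δ δ₁⌋ ∧
      ({w | G.Adj v w}.ncard : ℤ) ≤ ⌊N1 s t δ δ₁⌋) := by
  classical
  have := Fintype.ofFinite V
  have ncard_adj : ∀ v, {w | G.Adj v w}.ncard = G.degree v := fun v => by
    rw [← card_neighborSet_eq_degree, ← Nat.card_eq_fintype_card, Nat.card_coe_set_eq]
    rfl
  simp only [ncard_adj, Int.le_floor, Int.cast_natCast]
  by_contra! ⟨hK, hmin, hlight⟩
  have hmin' : ∀ v, s ≤ G.degree v := fun v => Nat.le_of_pred_lt (hmin v)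
  have hlow : G.IsIndepSet {v | (G.degree v : ℝ) ≤ N1 s t δ δ₁} :=
    fun u hu v hv _ huv => (hlight u v huv hu).not_ge hv
  rcases hs.eq_or_lt with rfl | hs
  · refine hK <| containsSubgraph_KstarGraph_one_of_isIndepSet hmin' <|
      hlow.mono fun v (hv : G.degree v < t) => ?_
    rw [Set.mem_ofPred_eq, N1, if_pos rfl, le_sub_iff_add_le]
    exact_mod_cast hv
  · exact hK (containsSubgraph_KstarGraph_of_isIndepSet hs ht
      (Nat.card_eq_fintype_card (α := V) ▸ havg) hsub hmin' hlow)

/-- Lemma 3 of the paper: if every subgraph of `G` has average degree at most `δ` and every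
graph whose exact 1-subdivision is a subgraph of `G` has average degree at most `δ₁`, then
`G` contains `K*_{s,t}`, or has a vertex of degree at most `s-1`, or has an
`⌊N₁(s,t,δ,δ₁)⌋`-light edge. -/
theorem stmt1 {V : Type} [Fintype V] [Nonempty V] (G : SimpleGraph V)
    (s t : ℕ) (hs : 1 ≤ s) (ht : 1 ≤ t) (δ δ₁ : ℝ) (hδ : 0 < δ) (hδ₁ : 0 < δ₁)
    (hmad : ∀ H : G.Subgraph, H.verts.Nonempty →
      2 * (H.edgeSet.ncard : ℝ) ≤ δ * (H.verts.ncard : ℝ))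
    (hsub : ∀ (n : ℕ) (H : SimpleGraph (Fin n)), 0 < n →
      ContainsSubgraph G (exactOneSubdivision H) →
      2 * (H.edgeSet.ncard : ℝ) ≤ δ₁ * (n : ℝ)) :
    ContainsSubgraph G (KstarGraph s t) ∨
    (∃ v : V, {w | G.Adj v w}.ncard ≤ s - 1) ∨
    (∃ u v : V, G.Adj u v ∧ ({w | G.Adj u w}.ncard : ℤ) ≤ ⌊N1 s t δ δ₁⌋ ∧
      ({w | G.Adj v w}.ncard : ℤ) ≤ ⌊N1 s t δ δ₁⌋) :=
  stmt1_general G s t hs ht δ δ₁ (by simpa using hmad ⊤ Set.univ_nonempty) hsub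
end

section
/- For integers s ≥ 2 and N ≥ 1, the graph G(s,N) has no K_{s,s} minor and is not (s−1, N)-colourable. -/
/-!
Let `G(1,N)` be a single vertex; then for every `s ≥ 2` the graph `G(s,N)` consists of `N + 1`
disjoint copies of `G(s-1,N)` together with a dominant vertex, and both claims descend along this
step.

A model of `K_{s+1,s+1}` in the big graph uses the dominant vertex in at most one branch set.
Dropping one branch set on each side leaves a model of the connected graph `K_{s,s}` avoiding the
dominant vertex, and this model lies inside a single copy.

In a `(k+1,N)`-colouring of the big graph, some copy misses the colour of the dominant vertex, which
would otherwise have `N + 1` neighbours of its own colour. That copy is `(k,N)`-coloured.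
-/

open SimpleGraph

universe u v

/-- `B` is a *model* of `H` in `G`, i.e. a family of branch sets realising `H` as a minor of `G`.
Nonemptiness of the branch sets is part of their connectedness. -/
structure IsMinorModel {V α : Type*} (H : SimpleGraph α) (G : SimpleGraph V) (B : α → Set V) :
    Prop where
  connected : ∀ a, (G.induce (B a)).Connected
  disjoint : Pairwise fun a b => Disjoint (B a) (B b)
  exists_adj : ∀ a b, H.Adj a b → ∃ x ∈ B a, ∃ y ∈ B b, G.Adj x y

/-- The graph consisting of disjoint copies of `G` indexed by `ι`, together with a dominant vertex
`none`; `G(s,N)` is obtained from `G(s-1,N)` in this way. -/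
def conedCopies {V : Type*} (ι : Type*) (G : SimpleGraph V) : SimpleGraph (Option (ι × V)) where
  Adj
    | none, none => False
    | none, some _ => True
    | some _, none => True
    | some (i, x), some (j, y) => i = j ∧ G.Adj x y
  symm := ⟨by rintro (_ | _) (_ | _) <;> simp +contextual [G.adj_comm]⟩
  loopless := ⟨by rintro (_ | _) <;> simp⟩

section Minors

variable {V W α β : Type*} {G : SimpleGraph V} {G' : SimpleGraph W}
  {H : SimpleGraph α} {H' : SimpleGraph β} {B : α → Set V}

lemma IsMinorModel.nonempty (hB : IsMinorModel H G B) (a : α) : (B a).Nonempty :=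
  Set.nonempty_coe_sort.1 (hB.connected a).nonempty

lemma isMinor_iff_exists_isMinorModel : IsMinor H G ↔ ∃ B, IsMinorModel H G B :=
  ⟨fun ⟨B, _, hconn, hdisj, hadj⟩ => ⟨B, hconn, hdisj, hadj⟩,
    fun ⟨B, hB⟩ => ⟨B, hB.nonempty, hB.connected, hB.disjoint, hB.exists_adj⟩⟩

lemma connected_induce_preimage (φ : G ↪g G') {S : Set W} (hS : S ⊆ Set.range φ)
    (hconn : (G'.induce S).Connected) : (G.induce (φ ⁻¹' S)).Connected := by
  have hbij : Function.Bijective (S.restrictPreimage φ) := by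
    refine ⟨φ.injective.restrictPreimage S, fun ⟨y, hy⟩ => ?_⟩
    obtain ⟨x, rfl⟩ := hS hy
    exact ⟨⟨x, hy⟩, rfl⟩
  let e : G.induce (φ ⁻¹' S) ≃g G'.induce S := ⟨.ofBijective _ hbij, φ.map_adj_iff⟩
  exact e.connected_iff.2 hconn

namespace IsMinorModel

lemma comp (hB : IsMinorModel H G B) (φ : Copy H' H) : IsMinorModel H' G (B ∘ φ) where
  connected b := hB.connected (φ b)
  disjoint _ _ hab := hB.disjoint (φ.injective.ne hab)
  exists_adj _ _ hab := hB.exists_adj _ _ (φ.toHom.map_adj hab)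

lemma preimage {B : α → Set W} (hB : IsMinorModel H G' B) (φ : G ↪g G')
    (hφ : ∀ a, B a ⊆ Set.range φ) : IsMinorModel H G fun a => φ ⁻¹' B a where
  connected a := connected_induce_preimage φ (hφ a) (hB.connected a)
  disjoint _ _ hab := (hB.disjoint hab).preimage φ
  exists_adj a b hab := by
    obtain ⟨x', hx, y', hy, hxy⟩ := hB.exists_adj a b hab
    obtain ⟨x, rfl⟩ := hφ a hx
    obtain ⟨y, rfl⟩ := hφ b hy
    exact ⟨x, hx, y, hy, φ.map_adj_iff.1 hxy⟩

lemma exists_forall_ne_notMem [Nonempty α] (hB : IsMinorModel H G B) (v : V) :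
    ∃ a, ∀ b, b ≠ a → v ∉ B b := by
  by_cases hv : ∃ a, v ∈ B a
  · obtain ⟨a, ha⟩ := hv
    exact ⟨a, fun b hba hb => Set.disjoint_left.1 (hB.disjoint hba) hb ha⟩
  · exact ⟨Classical.arbitrary α, fun b _ hb => hv ⟨b, hb⟩⟩

lemma reachable_of_mem (hB : IsMinorModel H G B) {a b : α} (hab : H.Reachable a b)
    {x y : V} (hx : x ∈ B a) (hy : y ∈ B b) :
    (G.induce (⋃ a, B a)).Reachable ⟨x, Set.mem_iUnion_of_mem a hx⟩
      ⟨y, Set.mem_iUnion_of_mem b hy⟩ := by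
  have within {a : α} {x y : V} (hx : x ∈ B a) (hy : y ∈ B a) :
      (G.induce (⋃ a, B a)).Reachable ⟨x, Set.mem_iUnion_of_mem a hx⟩
        ⟨y, Set.mem_iUnion_of_mem a hy⟩ :=
    ((hB.connected a).preconnected ⟨x, hx⟩ ⟨y, hy⟩).map
      (G.induceHomOfLE (Set.subset_iUnion B a)).toHom
  obtain ⟨walk⟩ := hab
  induction walk generalizing x with
  | nil => exact within hx hy
  | cons hac _ ih =>
    obtain ⟨x', hx', z, hz, hadj⟩ := hB.exists_adj _ _ hac
    have hstep : (G.induce (⋃ a, B a)).Adj ⟨x', Set.mem_iUnion_of_mem _ hx'⟩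
        ⟨z, Set.mem_iUnion_of_mem _ hz⟩ := hadj
    exact (within hx hx').trans (hstep.reachable.trans (ih hz hy))

lemma connected_iUnion (hB : IsMinorModel H G B) (hH : H.Connected) :
    (G.induce (⋃ a, B a)).Connected where
  preconnected := by
    rintro ⟨x, hx⟩ ⟨y, hy⟩
    obtain ⟨a, ha⟩ := Set.mem_iUnion.1 hx
    obtain ⟨b, hb⟩ := Set.mem_iUnion.1 hy
    exact hB.reachable_of_mem (hH.preconnected a b) ha hb
  nonempty :=
    have ⟨a⟩ := hH.nonempty
    ((hB.nonempty a).mono (Set.subset_iUnion B a)).to_subtype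

end IsMinorModel

lemma IsMinor.of_iso (e : G' ≃g G) (h : IsMinor H G) : IsMinor H G' := by
  rw [isMinor_iff_exists_isMinorModel] at h ⊢
  obtain ⟨B, hB⟩ := h
  exact ⟨_, hB.preimage e.toEmbedding fun _ x _ => e.surjective x⟩

lemma not_isMinor_bot {a b : α} (hab : H.Adj a b) : ¬ IsMinor H (⊥ : SimpleGraph V) := by
  rintro ⟨B, -, -, -, hadj⟩
  obtain ⟨x, -, y, -, hxy⟩ := hadj a b hab
  exact hxy

lemma connected_completeBipartiteGraph [Nonempty α] [Nonempty β] :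
    (completeBipartiteGraph α β).Connected := by
  let a₀ := Classical.arbitrary α
  let b₀ := Classical.arbitrary β
  have hadj (a : α) (b : β) : (completeBipartiteGraph α β).Adj (.inl a) (.inr b) := by simp
  refine (connected_iff_exists_forall_reachable _).2 ⟨.inl a₀, ?_⟩
  rintro (a | b)
  · exact (hadj a₀ b₀).reachable.trans (hadj a b₀).symm.reachable
  · exact (hadj a₀ b).reachable

lemma exists_copy_completeBipartiteGraph_ne {m n : ℕ} (a : Fin (m + 1) ⊕ Fin (n + 1)) :
    ∃ φ : Copy (completeBipartiteGraph (Fin m) (Fin n))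
      (completeBipartiteGraph (Fin (m + 1)) (Fin (n + 1))), ∀ b, φ b ≠ a := by
  let drop (i : Fin (m + 1)) (j : Fin (n + 1)) : Copy (completeBipartiteGraph (Fin m) (Fin n))
      (completeBipartiteGraph (Fin (m + 1)) (Fin (n + 1))) :=
    ⟨⟨Sum.map i.succAbove j.succAbove, by rintro (_ | _) (_ | _) <;> simp⟩,
      Sum.map_injective.2 ⟨i.succAbove_right_injective, j.succAbove_right_injective⟩⟩
  rcases a with i | j
  · refine ⟨drop i 0, ?_⟩
    rintro (b | b) h
    · exact i.succAbove_ne b (Sum.inl_injective h)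
    · exact Sum.inr_ne_inl h
  · refine ⟨drop 0 j, ?_⟩
    rintro (b | b) h
    · exact Sum.inl_ne_inr h
    · exact j.succAbove_ne b (Sum.inr_injective h)

end Minors

section Colourings

variable {V W : Type*} {G : SimpleGraph V} {G' : SimpleGraph W}

lemma ncard_monochromatic_le_of_copy {C : Type*} [Finite W] (φ : Copy G G') (c : W → C) (v : V) :
    {w | G.Adj v w ∧ c (φ w) = c (φ v)}.ncard ≤ {w | G'.Adj (φ v) w ∧ c w = c (φ v)}.ncard :=
  Set.ncard_le_ncard_of_injOn φ (fun _ hw => ⟨φ.toHom.map_adj hw.1, hw.2⟩) φ.injective.injOn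

lemma DefColorable.of_copy [Finite W] {k d : ℕ} (φ : Copy G G') :
    DefColorable G' k d → DefColorable G k d
  | ⟨c, hc⟩ => ⟨c ∘ φ, fun v => (ncard_monochromatic_le_of_copy φ c v).trans (hc (φ v))⟩

lemma not_defColorable_zero [Nonempty V] (d : ℕ) : ¬ DefColorable G 0 d :=
  fun ⟨c, _⟩ => (c (Classical.arbitrary V)).elim0

end Colourings

namespace conedCopies

variable {V ι α β : Type*} {G : SimpleGraph V} {H : SimpleGraph α} {H' : SimpleGraph β}

/-- The embedding of `G` as the copy with index `i`. -/
def copyEmbedding (G : SimpleGraph V) (i : ι) : G ↪g conedCopies ι G where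
  toFun x := some (i, x)
  inj' _ _ h := congrArg Prod.snd (Option.some_injective _ h)
  map_rel_iff' := and_iff_right rfl

lemma mem_range_copyEmbedding_of_adj {i : ι} {x y : Option (ι × V)}
    (hx : x ∈ Set.range (copyEmbedding G i))
    (hxy : (conedCopies ι G).Adj x y) (hy : y ≠ none) : y ∈ Set.range (copyEmbedding G i) := by
  obtain ⟨x, rfl⟩ := hx
  obtain ⟨⟨j, y⟩, rfl⟩ := Option.ne_none_iff_exists'.1 hy
  obtain ⟨rfl, -⟩ : i = j ∧ G.Adj x y := hxy
  exact ⟨y, rfl⟩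

lemma exists_subset_range_copyEmbedding {S : Set (Option (ι × V))}
    (hconn : ((conedCopies ι G).induce S).Connected) (hnone : none ∉ S) :
    ∃ i, S ⊆ Set.range (copyEmbedding G i) := by
  obtain ⟨x₀, hx₀⟩ := hconn.nonempty
  obtain ⟨⟨i, x⟩, rfl⟩ := Option.ne_none_iff_exists'.1 (ne_of_mem_of_not_mem hx₀ hnone)
  suffices h : ∀ y : S, (y : Option (ι × V)) ∈ Set.range (copyEmbedding G i) from
    ⟨i, fun y hy => h ⟨y, hy⟩⟩
  intro y
  have hreach := (reachable_iff_reflTransGen _ _).1 (hconn.preconnected ⟨some (i, x), hx₀⟩ y)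
  induction hreach with
  | refl => exact Set.mem_range_self x
  | @tail _ z _ hyz ih =>
    exact mem_range_copyEmbedding_of_adj ih hyz (ne_of_mem_of_not_mem z.2 hnone)

lemma isMinor_of_forall_exists_copy_ne [Nonempty α] (hH' : H'.Connected)
    (havoid : ∀ a, ∃ φ : Copy H' H, ∀ b, φ b ≠ a) (h : IsMinor H (conedCopies ι G)) :
    IsMinor H' G := by
  rw [isMinor_iff_exists_isMinorModel] at h ⊢
  obtain ⟨B, hB⟩ := h
  obtain ⟨a, ha⟩ := hB.exists_forall_ne_notMem none
  obtain ⟨φ, hφ⟩ := havoid a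
  have hBφ := hB.comp φ
  have hnone : none ∉ ⋃ b, (B ∘ φ) b := by simpa using fun b => ha (φ b) (hφ b)
  obtain ⟨i, hi⟩ := exists_subset_range_copyEmbedding (hBφ.connected_iUnion hH') hnone
  exact ⟨_, hBφ.preimage (copyEmbedding G i) fun b => (Set.subset_iUnion _ b).trans hi⟩

lemma isMinor_completeBipartiteGraph_of_succ {m n : ℕ} [NeZero m] [NeZero n]
    (h : IsMinor (completeBipartiteGraph (Fin (m + 1)) (Fin (n + 1))) (conedCopies ι G)) :
    IsMinor (completeBipartiteGraph (Fin m) (Fin n)) G :=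
  isMinor_of_forall_exists_copy_ne connected_completeBipartiteGraph
    exists_copy_completeBipartiteGraph_ne h

lemma exists_forall_color_copyEmbedding_ne {C : Type*} [Fintype ι] [Finite V] {d : ℕ}
    (hd : d < Fintype.card ι) {c : Option (ι × V) → C}
    (hc : {w | (conedCopies ι G).Adj none w ∧ c w = c none}.ncard ≤ d) :
    ∃ i, ∀ x, c (copyEmbedding G i x) ≠ c none := by
  by_contra! h
  choose x hx using h
  let f (i : ι) := copyEmbedding G i (x i)
  have hf : Function.Injective f := fun i j hij => congrArg Prod.fst (Option.some_injective _ hij)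
  have hsub : Set.range f ⊆ {w | (conedCopies ι G).Adj none w ∧ c w = c none} := by
    rintro _ ⟨i, rfl⟩
    exact ⟨trivial, hx i⟩
  have hcard : Fintype.card ι ≤ d := by
    calc Fintype.card ι = (Set.range f).ncard := by
          rw [Set.ncard_range_of_injective hf, Nat.card_eq_fintype_card]
      _ ≤ _ := Set.ncard_le_ncard hsub
      _ ≤ d := hc
  exact hd.not_ge hcard

lemma defColorable_of_succ [Fintype ι] [Finite V] {k d : ℕ} (hd : d < Fintype.card ι)
    (h : DefColorable (conedCopies ι G) (k + 1) d) : DefColorable G k d := by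
  obtain ⟨c, hc⟩ := h
  obtain ⟨i, hi⟩ := exists_forall_color_copyEmbedding_ne hd (hc none)
  choose c' hc' using fun x => Fin.exists_succAbove_eq (hi x)
  refine ⟨c', fun v => ?_⟩
  have hcolor (w : V) : c' w = c' v ↔ c (copyEmbedding G i w) = c (copyEmbedding G i v) := by
    rw [← hc', ← hc', Fin.succAbove_right_inj]
  simp only [hcolor]
  exact (ncard_monochromatic_le_of_copy (copyEmbedding G i).toCopy c v).trans
    (hc (copyEmbedding G i v))

end conedCopies

namespace GGraph

/-- `G(2,N)` as `N + 1` disjoint copies of a single vertex together with a dominant vertex. -/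
def isoZero (N : ℕ) : conedCopies (Fin (N + 1)) (⊥ : SimpleGraph Unit) ≃g GGraph 0 N :=
  let e : Option (Fin (N + 1) × Unit) ≃ Fin (N + 2) :=
    (Equiv.prodUnique (Fin (N + 1)) Unit).optionCongr.trans (finSuccEquiv (N + 1)).symm
  { toEquiv := e
    map_rel_iff' {x y} := by
      refine (fromRel_adj (fun i _ => i = (0 : Fin (N + 2))) (e x) (e y)).trans ?_
      rcases x with _ | ⟨i, -⟩ <;> rcases y with _ | ⟨j, -⟩ <;>
        simp [conedCopies, e, (Fin.succ_ne_zero _).symm] }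

/-- `G(t+3,N)` as `N + 1` disjoint copies of `G(t+2,N)` together with a dominant vertex. -/
def isoSucc (t N : ℕ) : conedCopies (Fin (N + 1)) (GGraph t N) ≃g GGraph (t + 1) N where
  toEquiv := .refl _
  map_rel_iff' {x y} := by
    refine (fromRel_adj _ x y).trans ?_
    rcases x with _ | ⟨i, x⟩ <;> rcases y with _ | ⟨j, y⟩ <;>
      grind [conedCopies, adj_comm, Adj.ne]

instance finite_GVert (N : ℕ) : ∀ t, Finite (GVert t N)
  | 0 => inferInstanceAs (Finite (Fin (N + 2)))
  | t + 1 =>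
    have := finite_GVert N t
    inferInstanceAs (Finite (Option (Fin (N + 1) × GVert t N)))

theorem not_isMinor_completeBipartiteGraph (t N : ℕ) :
    ¬ IsMinor (completeBipartiteGraph (Fin (t + 2)) (Fin (t + 2))) (GGraph t N) := by
  induction t with
  | zero =>
    intro h
    have hadj : (completeBipartiteGraph (Fin 1) (Fin 1)).Adj (.inl 0) (.inr 0) := by simp
    exact not_isMinor_bot hadj
      (conedCopies.isMinor_completeBipartiteGraph_of_succ (h.of_iso (isoZero N)))
  | succ t ih =>
    exact fun h => ih (conedCopies.isMinor_completeBipartiteGraph_of_succ (h.of_iso (isoSucc t N)))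

theorem not_defColorable (t N : ℕ) : ¬ DefColorable (GGraph t N) (t + 1) N := by
  have hcopies : N < Fintype.card (Fin (N + 1)) := by simp
  induction t with
  | zero =>
    exact fun h => not_defColorable_zero N
      (conedCopies.defColorable_of_succ hcopies (h.of_copy (isoZero N).toCopy))
  | succ t ih =>
    exact fun h => ih (conedCopies.defColorable_of_succ hcopies (h.of_copy (isoSucc t N).toCopy))

end GGraph

/-- For integers `s ≥ 2` and `N ≥ 1`, the graph `G(s,N)` has no `K_{s,s}` minor and is not
`(s-1, N)`-colourable. -/
theorem stmt3 (s N : ℕ) (hs : 2 ≤ s) (hN : 1 ≤ N) :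
    ¬ IsMinor (completeBipartiteGraph (Fin s) (Fin s)) (GGraph (s - 2) N) ∧
    ¬ DefColorable (GGraph (s - 2) N) (s - 1) N := by
  obtain ⟨t, rfl⟩ := Nat.exists_eq_add_of_le' hs
  exact ⟨GGraph.not_isMinor_completeBipartiteGraph t N, GGraph.not_defColorable t N⟩
end

section
/- Let a, a′ be positive reals, b, b′ reals, and δ, ℓ positive integers satisfying: (1) 2a ≥ δ > a′; (2) (δ − a′)ℓ > (2a − a′)δ; and (3) (δ − a′)ℓ² − ((2a − a′)δ + b′ − δ + a′)ℓ − (2a − a′ + 2b − b′)δ > 0. Let G be a finite simple graph with n ≥ 1 vertices, at most an + b edges, and minimum degree at least δ, such that every spanning bipartite subgraph of G has at most a′n + b′ edges. Then G has an (ℓ−1)-light edge. -/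
/-!
Suppose no edge is `(ℓ-1)`-light. Then the set `X` of vertices of degree less than `ℓ` is
independent, so the cut between `X` and its complement has exactly `m = ∑ v ∈ X, deg v` edges.
Hence `δ|X| ≤ m`, while the handshake lemma gives `m + ℓ|Xᶜ| ≤ 2|E|`. Adding `ℓ` times the first
inequality to `δ` times the second yields `δℓn ≤ 2δ|E| + (ℓ - δ)m`, and the bounds on `|E|` and
`m` turn this into `((δ - a')ℓ - (2a - a')δ)n ≤ (ℓ - δ)b' + 2δb`. The coefficient of `n` is
nonnegative and, since `G` has an edge and `X` is independent, some vertex lies outside `X`, so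
that `n ≥ ℓ + 1`. With `ℓ + 1` in place of `n`, the inequality is the negation of the last
numerical hypothesis.
-/

open SimpleGraph

universe u v

open scoped Finset

lemma edgeSet_between_compl {V : Type*} (G : SimpleGraph V) (S : Set V) :
    (G.between S Sᶜ).edgeSet =
      {e ∈ G.edgeSet | ∀ x y, e = s(x, y) → (x ∈ S ↔ y ∉ S)} := by
  ext e
  induction e with | _ u v
  simp only [mem_edgeSet, between_adj, Set.mem_compl_iff, Set.mem_ofPred_eq]
  refine and_congr_right fun _ => ⟨fun h x y hxy => ?_, fun h => ?_⟩
  · rcases Sym2.eq_iff.1 hxy with ⟨rfl, rfl⟩ | ⟨rfl, rfl⟩ <;> tauto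
  · have := h u v rfl
    tauto

section DegreeCount

variable {V R : Type*} {G : SimpleGraph V} {X : Finset V}

lemma ncard_neighborSet_eq_degree (v : V) [Fintype (G.neighborSet v)] :
    (G.neighborSet v).ncard = G.degree v := by
  rw [Set.ncard_eq_toFinset_card', ← neighborFinset_def, card_neighborFinset_eq_degree]

lemma mul_card_le_sum_degree [G.LocallyFinite] [Semiring R] [PartialOrder R] [IsOrderedRing R]
    {d : R} (hd : ∀ v ∈ X, d ≤ G.degree v) : d * #X ≤ ∑ v ∈ X, (G.degree v : R) := by
  rw [← nsmul_eq_mul']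
  exact Finset.card_nsmul_le_sum X _ d hd

variable [Fintype V] [DecidableRel G.Adj]

lemma add_one_le_card_of_isIndepSet [Semiring R] [PartialOrder R] [IsOrderedRing R]
    {d : R} (hG : G ≠ ⊥) (hX : G.IsIndepSet X) (hd : ∀ v ∉ X, d ≤ G.degree v) :
    d + 1 ≤ Fintype.card V := by
  obtain ⟨u, w, huw⟩ := ne_bot_iff_exists_adj.1 hG
  obtain ⟨v, hv⟩ : ∃ v, v ∉ X := by
    by_contra! hall
    exact hX (hall u) (hall w) huw.ne huw
  calc d + 1 ≤ G.degree v + 1 := by gcongr; exact hd v hv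
    _ ≤ Fintype.card V := by
        rw [← Nat.cast_add_one]
        exact Nat.mono_cast (G.degree_lt_card_verts v)

variable [DecidableEq V]

lemma degree_between_compl_of_isIndepSet (hX : G.IsIndepSet X) {v : V} (hv : v ∈ X) :
    (G.between X (Xᶜ : Finset V)).degree v = G.degree v := by
  rw [← card_neighborFinset_eq_degree, ← card_neighborFinset_eq_degree]
  congr 1
  ext w
  have hw : G.Adj v w → w ∉ X := fun hvw hwX => hX hv hwX hvw.ne hvw
  simp only [mem_neighborFinset, between_adj, Finset.mem_coe, Finset.mem_compl]
  tauto

lemma sum_degree_eq_card_edgeFinset_between_compl (hX : G.IsIndepSet X) :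
    ∑ v ∈ X, G.degree v = #(G.between X (Xᶜ : Finset V)).edgeFinset := by
  rw [← isBipartiteWith_sum_degrees_eq_card_edges
    (between_isBipartiteWith (Finset.disjoint_coe.2 disjoint_compl_right))]
  exact Finset.sum_congr rfl fun v hv => (degree_between_compl_of_isIndepSet hX hv).symm

lemma mul_card_le_card_edgeFinset_between_compl [Semiring R] [PartialOrder R] [IsOrderedRing R]
    {d : R} (hX : G.IsIndepSet X) (hd : ∀ v ∈ X, d ≤ G.degree v) :
    d * #X ≤ #(G.between X (Xᶜ : Finset V)).edgeFinset := by
  rw [← sum_degree_eq_card_edgeFinset_between_compl hX, Nat.cast_sum]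
  exact mul_card_le_sum_degree hd

lemma card_edgeFinset_between_compl_add_mul_card_compl_le [Semiring R] [PartialOrder R]
    [IsOrderedRing R] {d : R} (hX : G.IsIndepSet X) (hd : ∀ v ∉ X, d ≤ G.degree v) :
    #(G.between X (Xᶜ : Finset V)).edgeFinset + d * #Xᶜ ≤ 2 * (#G.edgeFinset : R) :=
  calc (#(G.between X (Xᶜ : Finset V)).edgeFinset : R) + d * #Xᶜ
    _ ≤ ∑ v ∈ X, (G.degree v : R) + ∑ v ∈ Xᶜ, (G.degree v : R) := by
        rw [← sum_degree_eq_card_edgeFinset_between_compl hX, Nat.cast_sum]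
        gcongr
        exact mul_card_le_sum_degree fun v hv => hd v (Finset.mem_compl.1 hv)
    _ = 2 * (#G.edgeFinset : R) := by
        rw [Finset.sum_add_sum_compl, ← Nat.cast_sum, sum_degrees_eq_twice_card_edges,
          Nat.cast_mul, Nat.cast_two]

lemma mul_mul_card_le_of_isIndepSet [CommRing R] [PartialOrder R] [IsOrderedRing R] {d D : R}
    (hd : 0 ≤ d) (hD : 0 ≤ D) (hX : G.IsIndepSet X) (hdX : ∀ v ∈ X, d ≤ G.degree v)
    (hDX : ∀ v ∉ X, D ≤ G.degree v) :
    d * D * Fintype.card V ≤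
      2 * d * #G.edgeFinset + (D - d) * #(G.between X (Xᶜ : Finset V)).edgeFinset := by
  set m := (#(G.between X (Xᶜ : Finset V)).edgeFinset : R)
  have hcut : d * #X ≤ m := mul_card_le_card_edgeFinset_between_compl hX hdX
  have hcount : m + D * #Xᶜ ≤ 2 * (#G.edgeFinset : R) :=
    card_edgeFinset_between_compl_add_mul_card_compl_le hX hDX
  calc d * D * Fintype.card V
    _ = D * (d * #X) + d * (m + D * #Xᶜ) - d * m := by
        rw [← Finset.card_add_card_compl X]
        push_cast
        ring
    _ ≤ D * m + d * (2 * #G.edgeFinset) - d * m := by gcongr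
    _ = 2 * d * #G.edgeFinset + (D - d) * m := by ring

end DegreeCount

theorem stmt6_general {V R : Type*} [Fintype V] [Nonempty V] [CommRing R] [LinearOrder R]
    [IsStrictOrderedRing R] (G : SimpleGraph V) {a a' b b' δ l : R} (hδ : 0 < δ) (hδl : δ ≤ l)
    (h2 : (2 * a - a') * δ ≤ (δ - a') * l)
    (h3 : 0 < (δ - a') * l ^ 2 - ((2 * a - a') * δ + b' - δ + a') * l
      - (2 * a - a' + 2 * b - b') * δ)
    (hE : (G.edgeSet.ncard : R) ≤ a * Fintype.card V + b)
    (hmin : ∀ v, δ ≤ (G.neighborSet v).ncard)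
    (hcut : ∀ S : Set V, G.IsIndepSet S →
      ((G.between S Sᶜ).edgeSet.ncard : R) ≤ a' * Fintype.card V + b') :
    ∃ u v, G.Adj u v ∧ ((G.neighborSet u).ncard : R) < l ∧ ((G.neighborSet v).ncard : R) < l := by
  classical
  simp only [ncard_neighborSet_eq_degree] at hmin ⊢
  by_contra! hno
  let X : Finset V := {v | (G.degree v : R) < l}
  have hX : G.IsIndepSet X := fun u hu v hv _ huv =>
    (hno u v huv ((Finset.mem_filter_univ u).1 hu)).not_gt ((Finset.mem_filter_univ v).1 hv)
  have hXc : ∀ v ∉ X, l ≤ G.degree v := fun v hv => by simpa [X] using hv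
  have hG : G ≠ ⊥ := by
    rintro rfl
    simpa using hδ.trans_le (hmin (Classical.arbitrary V))
  have hn : l + 1 ≤ Fintype.card V := add_one_le_card_of_isIndepSet hG hX hXc
  have hcutX := hcut X hX
  rw [← Finset.coe_compl, ← coe_edgeFinset, Set.ncard_coe_finset] at hcutX
  rw [← coe_edgeFinset, Set.ncard_coe_finset] at hE
  set n := (Fintype.card V : R)
  have hcount : δ * l * n ≤ 2 * δ * (a * n + b) + (l - δ) * (a' * n + b') :=
    (mul_mul_card_le_of_isIndepSet hδ.le (hδ.le.trans hδl) hX (fun v _ => hmin v) hXc).trans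
      (by gcongr)
  have hupper : n * ((δ - a') * l - (2 * a - a') * δ) ≤ (l - δ) * b' + 2 * δ * b := by
    linarith only [hcount]
  have hlower : (l + 1) * ((δ - a') * l - (2 * a - a') * δ) ≤
      n * ((δ - a') * l - (2 * a - a') * δ) := by
    gcongr
  linarith only [h3, hlower, hupper]

/-- The light edge lemma: under the stated density and degree hypotheses, `G` has an
`(ℓ-1)`-light edge. The number of edges of the largest spanning bipartite subgraph of `G`
induced by a bipartition `(S, Sᶜ)` is expressed as the number of edges of `G` joining `S`
to its complement. -/
theorem stmt6 {V : Type} [Fintype V] [Nonempty V] (G : SimpleGraph V)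
    (a a' b b' : ℝ) (δ l : ℕ) (ha : 0 < a) (ha' : 0 < a') (hδ : 1 ≤ δ) (hl : 1 ≤ l)
    (h1a : (δ : ℝ) ≤ 2 * a) (h1b : a' < (δ : ℝ))
    (h2 : (2 * a - a') * (δ : ℝ) < ((δ : ℝ) - a') * (l : ℝ))
    (h3 : 0 < ((δ : ℝ) - a') * (l : ℝ) ^ 2
      - ((2 * a - a') * (δ : ℝ) + b' - (δ : ℝ) + a') * (l : ℝ)
      - (2 * a - a' + 2 * b - b') * (δ : ℝ))
    (hE : (G.edgeSet.ncard : ℝ) ≤ a * (Fintype.card V : ℝ) + b)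
    (hmin : ∀ v : V, δ ≤ {w | G.Adj v w}.ncard)
    (hbip : ∀ S : Set V,
      (({e ∈ G.edgeSet | ∀ x y, e = s(x, y) → (x ∈ S ↔ y ∉ S)}.ncard : ℝ)) ≤
        a' * (Fintype.card V : ℝ) + b') :
    ∃ u v : V, G.Adj u v ∧ {w | G.Adj u w}.ncard ≤ l - 1 ∧ {w | G.Adj v w}.ncard ≤ l - 1 := by
  have hδl : (δ : ℝ) < l := lt_of_mul_lt_mul_left
    ((mul_le_mul_of_nonneg_right (sub_le_sub_right h1a a') δ.cast_nonneg).trans_lt h2)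
    (sub_nonneg.2 h1b.le)
  obtain ⟨u, v, huv, hu, hv⟩ := stmt6_general G (Nat.cast_pos.2 hδ) hδl.le h2.le h3 hE
    (fun w => Nat.cast_le.2 (hmin w)) fun S _ => edgeSet_between_compl G S ▸ hbip S
  exact ⟨u, v, huv, Nat.le_sub_one_of_lt (Nat.cast_lt.1 hu),
    Nat.le_sub_one_of_lt (Nat.cast_lt.1 hv)⟩
end

section
/- For every integer k ≥ 1 there exists an integer d such that every finite simple graph admitting a k-stack layout is (k+1, d)-choosable. -/
/-!
A vertex with at most `k` neighbours can be coloured last, with a colour of its list that no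
neighbour uses, and an edge both of whose ends have degree at most `d` does no harm to a colouring
with defect `d`. So, by induction on the edges, a graph is `(k+1, d)`-choosable if every subgraph
with an edge has a vertex of degree between `1` and `k`, or such a light edge.

A graph with a `k`-stack layout has this property for `d = 4k(3k+1)`. Otherwise let `A` be the set
of vertices of degree between `1` and `d`, and `B` that of vertices of degree greater than `d`.
Each vertex of `A` has more than `k` neighbours, all in `B`, so two of these edges lie in a common
stack. Drawn on one side of a line, a stack is outerplanar, which allows at most `3|B|` vertices
with two neighbours in `B`, hence `|A| ≤ 3k|B|`. Likewise a stack has at most `2(|A| + |B|)` edges,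
so the degrees of the vertices in `B` sum to at most `4k(|A| + |B|) ≤ 4k(3k+1)|B| = d|B|`, which is
impossible.
-/

open SimpleGraph

universe u v

open Finset

section DefectiveColoring

variable {V α : Type*} {G : SimpleGraph V} {k d : ℕ} {c : V → α} {v x y : V}

/-- `c` is a colouring of `G` with defect at most `d`: every vertex has at most `d` neighbours of
its own colour. As in `Choosable`, these are counted by `Set.ncard`, so infinitely many count as
`0`. -/
def IsDefectiveColoring (G : SimpleGraph V) (d : ℕ) (c : V → α) : Prop :=
  ∀ v, {w | G.Adj v w ∧ c w = c v}.ncard ≤ d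

lemma isDefectiveColoring_bot : IsDefectiveColoring (⊥ : SimpleGraph V) d c := by
  simp [IsDefectiveColoring]

lemma IsDefectiveColoring.update [DecidableEq V] [G.LocallyFinite] {γ : α}
    (hc : IsDefectiveColoring (G.deleteIncidenceSet v) d c) (hγ : ∀ w, G.Adj v w → c w ≠ γ) :
    IsDefectiveColoring G d (Function.update c v γ) := by
  intro u
  rcases eq_or_ne u v with rfl | huv
  · have hnone : {w | G.Adj u w ∧ Function.update c u γ w = Function.update c u γ u} = ∅ := by
      refine Set.eq_empty_of_forall_notMem fun w ⟨huw, hw⟩ => hγ w huw ?_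
      rwa [Function.update_self, Function.update_of_ne huw.ne'] at hw
    rw [hnone, Set.ncard_empty]
    exact d.zero_le
  · have hfin : {w | (G.deleteIncidenceSet v).Adj u w ∧ c w = c u}.Finite :=
      (Set.toFinite (G.neighborSet u)).subset fun _ h => deleteIncidenceSet_le G v h.1
    refine (Set.ncard_le_ncard ?_ hfin).trans (hc u)
    rintro w ⟨huw, hw⟩
    rw [Function.update_of_ne huv] at hw
    have hwv : w ≠ v := by
      rintro rfl
      rw [Function.update_self] at hw
      exact hγ u huw.symm hw.symm
    rw [Function.update_of_ne hwv] at hw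
    exact ⟨deleteIncidenceSet_adj.2 ⟨huw, huv, hwv⟩, hw⟩

lemma ncard_adj_and_le_degree (G : SimpleGraph V) (v : V) [Fintype (G.neighborSet v)]
    (p : V → Prop) : {w | G.Adj v w ∧ p w}.ncard ≤ G.degree v := by
  rw [← card_neighborFinset_eq_degree, ← Set.ncard_coe_finset]
  exact Set.ncard_le_ncard (fun w hw => by simpa using hw.1) (Set.toFinite _)

lemma IsDefectiveColoring.of_deleteEdges_singleton [G.LocallyFinite]
    (hc : IsDefectiveColoring (G.deleteEdges {s(x, y)}) d c)
    (hx : G.degree x ≤ d) (hy : G.degree y ≤ d) : IsDefectiveColoring G d c := by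
  intro v
  rcases eq_or_ne v x with rfl | hvx
  · exact (ncard_adj_and_le_degree G v _).trans hx
  rcases eq_or_ne v y with rfl | hvy
  · exact (ncard_adj_and_le_degree G v _).trans hy
  have hfin : {w | (G.deleteEdges {s(x, y)}).Adj v w ∧ c w = c v}.Finite :=
    (Set.toFinite (G.neighborSet v)).subset fun _ h => deleteEdges_le _ h.1
  refine (Set.ncard_le_ncard ?_ hfin).trans (hc v)
  rintro w ⟨hvw, hw⟩
  exact ⟨deleteEdges_adj.2 ⟨hvw, by simp [hvx, hvy]⟩, hw⟩

lemma exists_mem_forall_adj_ne [Fintype (G.neighborSet v)] (c : V → α) {s : Finset α}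
    (h : G.degree v < #s) : ∃ γ ∈ s, ∀ w, G.Adj v w → c w ≠ γ := by
  classical
  obtain ⟨γ, hγ, hγc⟩ := exists_mem_notMem_of_card_lt_card
    (s := (G.neighborFinset v).image c) (card_image_le.trans_lt h)
  exact ⟨γ, hγ, fun w hw e =>
    hγc (mem_image.2 ⟨w, (mem_neighborFinset ..).2 hw, e⟩)⟩

open Classical in
theorem exists_isDefectiveColoring_of_lowDegree_or_lightEdge [Fintype V] (G : SimpleGraph V)
    (hG : ∀ H ≤ G, H ≠ ⊥ → (∃ v, 0 < H.degree v ∧ H.degree v ≤ k) ∨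
      ∃ x y, H.Adj x y ∧ H.degree x ≤ d ∧ H.degree y ≤ d)
    (L : V → Finset α) (hL : ∀ v, k < #(L v)) :
    ∃ c : V → α, (∀ v, c v ∈ L v) ∧ IsDefectiveColoring G d c := by
  induction G using WellFoundedLT.induction with
  | ind G ih =>
  have ih' (H : SimpleGraph V) (hH : H < G) := ih H hH fun H' hH' => hG H' (hH'.trans hH.le)
  rcases eq_or_ne G ⊥ with rfl | hne
  · choose c hc using fun v => card_pos.1 (Nat.zero_lt_of_lt (hL v))
    exact ⟨c, hc, isDefectiveColoring_bot⟩
  rcases hG G le_rfl hne with ⟨v, hpos, hdeg⟩ | ⟨x, y, hxy, hx, hy⟩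
  · have hlt : G.deleteIncidenceSet v < G := by
      obtain ⟨w, hw⟩ := (G.degree_pos_iff_exists_adj v).1 hpos
      refine (deleteIncidenceSet_le G v).lt_of_not_ge fun hle => ?_
      exact (deleteIncidenceSet_adj.1 (hle hw)).2.1 rfl
    obtain ⟨c, hcL, hc⟩ := ih' _ hlt
    obtain ⟨γ, hγL, hγ⟩ := exists_mem_forall_adj_ne c (hdeg.trans_lt (hL v))
    refine ⟨Function.update c v γ, fun w => ?_, hc.update hγ⟩
    rcases eq_or_ne w v with rfl | hwv
    · rwa [Function.update_self]
    · rw [Function.update_of_ne hwv]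
      exact hcL w
  · have hlt : G.deleteEdges {s(x, y)} < G := by
      refine (deleteEdges_le _).lt_of_not_ge fun hle => ?_
      exact (deleteEdges_adj.1 (hle hxy)).2 rfl
    obtain ⟨c, hcL, hc⟩ := ih' _ hlt
    exact ⟨c, hcL, hc.of_deleteEdges_singleton hx hy⟩

end DefectiveColoring

section NonCrossing

variable {V : Type*} [LinearOrder V] {G : SimpleGraph V} {A B : Finset V}

/-- No two edges of `G` cross in the given ordering of the vertices: `G` admits a one-stack layout
with this ordering. -/
def IsNonCrossing (G : SimpleGraph V) : Prop :=
  ∀ ⦃a b c d⦄, G.Adj a b → G.Adj c d → ¬(a < c ∧ c < b ∧ b < d)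

lemma injOn_of_lt_imp_ne {β : Type*} {f : V → β} {s : Set V}
    (hf : ∀ a ∈ s, ∀ b ∈ s, a < b → f a ≠ f b) : s.InjOn f :=
  Set.injOn_iff_injective.2 <| .of_lt_imp_ne fun a b hab => hf a a.2 b b.2 hab

lemma adj_inf_sup {e : Sym2 V} (he : e ∈ G.edgeSet) : G.Adj e.inf e.sup := by
  rwa [← mem_edgeSet, show s(e.inf, e.sup) = e from Sym2.sortEquiv.symm_apply_apply e]

namespace IsNonCrossing

lemma sup_le_sup (h : IsNonCrossing G) {e e' : Sym2 V} (he : e ∈ G.edgeSet)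
    (he' : e' ∈ G.edgeSet) (hinf : e.inf < e'.inf) (hlt : e'.inf < e.sup) : e'.sup ≤ e.sup :=
  not_lt.1 fun hsup => h (adj_inf_sup he) (adj_inf_sup he') ⟨hinf, hlt, hsup⟩

/-- Charge an edge to its left end if it is the longest edge going right from there, and to its
right end otherwise. -/
lemma card_edgeFinset_le [Fintype G.edgeSet] (h : IsNonCrossing G) {S : Finset V}
    (hS : G.support ⊆ S) : #G.edgeFinset ≤ 2 * #S := by
  classical
  let longest (e : Sym2 V) : Prop := ∀ e' ∈ G.edgeSet, e'.inf = e.inf → e'.sup ≤ e.sup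
  have hlongest : #{e ∈ G.edgeFinset | longest e} ≤ #S := by
    refine card_le_card_of_injOn Sym2.inf ?_ ?_
    · intro e he
      simp only [coe_filter, mem_edgeFinset, Set.mem_ofPred_eq] at he
      exact hS (adj_inf_sup he.1).left_mem_support
    · intro e he e' he' heq
      simp only [coe_filter, mem_edgeFinset, Set.mem_ofPred_eq] at he he'
      exact Sym2.inf_eq_inf_and_sup_eq_sup.1
        ⟨heq, (he'.2 e he.1 heq).antisymm (he.2 e' he'.1 heq.symm)⟩
  have hrest : #{e ∈ G.edgeFinset | ¬ longest e} ≤ #S := by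
    -- If two edges share their right end, an edge from the inner left end that reaches further
    -- would cross the longer of the two.
    have longest_of_lt {e e' : Sym2 V} (he : e ∈ G.edgeSet) (he' : e' ∈ G.edgeSet)
        (hsup : e.sup = e'.sup) (hlt : e.inf < e'.inf) : longest e' := fun e'' he'' hinf =>
      hsup ▸ h.sup_le_sup he he'' (hinf ▸ hlt)
        (hinf ▸ hsup ▸ (Sym2.inf_le_sup e').lt_of_ne (adj_inf_sup he').ne)
    refine card_le_card_of_injOn Sym2.sup ?_ ?_
    · intro e he
      simp only [coe_filter, mem_edgeFinset, Set.mem_ofPred_eq] at he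
      exact hS (adj_inf_sup he.1).right_mem_support
    · intro e he e' he' heq
      simp only [coe_filter, mem_edgeFinset, Set.mem_ofPred_eq] at he he'
      refine Sym2.inf_eq_inf_and_sup_eq_sup.1 ⟨?_, heq⟩
      exact le_antisymm
        (not_lt.1 fun hlt => he.2 (longest_of_lt he'.1 he.1 heq.symm hlt))
        (not_lt.1 fun hlt => he'.2 (longest_of_lt he.1 he'.1 heq hlt))
  rw [← card_filter_add_card_filter_not (s := G.edgeFinset) longest, two_mul]
  exact Nat.add_le_add hlongest hrest

lemma card_le_of_two_neighbors_right (h : IsNonCrossing G)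
    (hA : ∀ a ∈ A, ∃ x ∈ B, ∃ y, a < x ∧ x < y ∧ G.Adj a x ∧ G.Adj a y) : #A ≤ #B := by
  choose! x hxB y hax hxy hadjx hadjy using hA
  refine card_le_card_of_injOn x hxB (injOn_of_lt_imp_ne ?_)
  intro a ha a' ha' hlt heq
  exact h (hadjx a ha) (hadjy a' ha') ⟨hlt, heq ▸ hax a' ha', heq ▸ hxy a' ha'⟩

lemma card_le_of_two_neighbors_left (h : IsNonCrossing G)
    (hA : ∀ a ∈ A, ∃ x, ∃ y ∈ B, x < y ∧ y < a ∧ G.Adj a x ∧ G.Adj a y) : #A ≤ #B := by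
  choose! x y hyB hxy hya hadjx hadjy using hA
  refine card_le_card_of_injOn y hyB (injOn_of_lt_imp_ne ?_)
  intro a ha a' ha' hlt heq
  exact h (hadjx a ha).symm (hadjy a' ha').symm ⟨heq ▸ hxy a ha, heq ▸ hya a ha, hlt⟩

/-- Charge each vertex of `A` to the last vertex of `B` before it. -/
lemma card_le_of_neighbors_both_sides (h : IsNonCrossing G) (hAB : Disjoint A B)
    (hA : ∀ a ∈ A, ∃ x ∈ B, ∃ y ∈ B, x < a ∧ a < y ∧ G.Adj a x ∧ G.Adj a y) : #A ≤ #B := by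
  choose! x hxB y hyB hxa hay hadjx hadjy using hA
  have hpred : ∀ a ∈ A, ∃ p ∈ B, p < a ∧ ∀ b ∈ B, b < a → b ≤ p := by
    intro a ha
    obtain ⟨p, hp, hmax⟩ := exists_max_image {b ∈ B | b < a} id
      ⟨x a, mem_filter.2 ⟨hxB a ha, hxa a ha⟩⟩
    rw [mem_filter] at hp
    exact ⟨p, hp.1, hp.2, fun b hb hba => hmax b (mem_filter.2 ⟨hb, hba⟩)⟩
  choose! p hpB hpa hpmax using hpred
  refine card_le_card_of_injOn p hpB (injOn_of_lt_imp_ne ?_)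
  intro a ha a' ha' hlt heq
  have hxa' : x a' < a := (hpmax a' ha' _ (hxB a' ha') (hxa a' ha')).trans_lt (heq ▸ hpa a ha)
  have hay' : a' < y a := by
    refine lt_of_le_of_ne (not_lt.1 fun hya => ?_) (disjoint_iff_ne.1 hAB a' ha' _ (hyB a ha))
    exact (hpmax a' ha' _ (hyB a ha) hya).not_gt (heq ▸ (hpa a ha).trans (hay a ha))
  exact h (hadjx a' ha').symm (hadjy a ha) ⟨hxa', hlt, hay'⟩

lemma card_le_three_mul_of_one_lt_card_adj [DecidableRel G.Adj] (h : IsNonCrossing G)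
    (hAB : Disjoint A B) (hA : ∀ a ∈ A, 1 < #{b ∈ B | G.Adj a b}) : #A ≤ 3 * #B := by
  classical
  let right (a : V) : Prop := ∃ x ∈ B, ∃ y, a < x ∧ x < y ∧ G.Adj a x ∧ G.Adj a y
  let left (a : V) : Prop := ∃ x, ∃ y ∈ B, x < y ∧ y < a ∧ G.Adj a x ∧ G.Adj a y
  let both (a : V) : Prop := ∃ x ∈ B, ∃ y ∈ B, x < a ∧ a < y ∧ G.Adj a x ∧ G.Adj a y
  have hcover : A ⊆ ({a ∈ A | right a} ∪ {a ∈ A | left a}) ∪ {a ∈ A | both a} := by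
    intro a ha
    have hneB {b : V} (hb : b ∈ B) : a ≠ b := disjoint_iff_ne.1 hAB a ha b hb
    obtain ⟨x, y, hx, hy, hxy⟩ : ∃ x y, (x ∈ B ∧ G.Adj a x) ∧ (y ∈ B ∧ G.Adj a y) ∧ x < y := by
      obtain ⟨x, hx, y, hy, hne⟩ := one_lt_card.1 (hA a ha)
      rw [mem_filter] at hx hy
      rcases hne.lt_or_gt with hlt | hlt
      exacts [⟨x, y, hx, hy, hlt⟩, ⟨y, x, hy, hx, hlt⟩]
    simp only [mem_union, mem_filter, ha, true_and]
    rcases (hneB hx.1).lt_or_gt with hax | hxa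
    · exact .inl (.inl ⟨x, hx.1, y, hax, hxy, hx.2, hy.2⟩)
    rcases (hneB hy.1).lt_or_gt with hay | hya
    · exact .inr ⟨x, hx.1, y, hy.1, hxa, hay, hx.2, hy.2⟩
    · exact .inl (.inr ⟨x, y, hy.1, hxy, hya, hx.2, hy.2⟩)
  have hright : #{a ∈ A | right a} ≤ #B :=
    h.card_le_of_two_neighbors_right fun _ ha => (mem_filter.1 ha).2
  have hleft : #{a ∈ A | left a} ≤ #B :=
    h.card_le_of_two_neighbors_left fun _ ha => (mem_filter.1 ha).2
  have hboth : #{a ∈ A | both a} ≤ #B :=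
    h.card_le_of_neighbors_both_sides (hAB.mono_left (filter_subset _ _))
      fun _ ha => (mem_filter.1 ha).2
  calc #A ≤ #{a ∈ A | right a} + #{a ∈ A | left a} + #{a ∈ A | both a} :=
        (card_le_card hcover).trans <|
          (card_union_le _ _).trans (Nat.add_le_add_right (card_union_le _ _) _)
    _ ≤ 3 * #B := by omega

end IsNonCrossing

end NonCrossing

section StackLayout

variable {V κ : Type*} {G H : SimpleGraph V} {σ : Sym2 V → κ}

/-- The spanning subgraph of `G` formed by the edges that `σ` puts into the stack `i`. -/
def stackGraph (G : SimpleGraph V) (σ : Sym2 V → κ) (i : κ) : SimpleGraph V where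
  Adj u v := G.Adj u v ∧ σ s(u, v) = i
  symm := ⟨fun _ _ h => ⟨h.1.symm, Sym2.eq_swap ▸ h.2⟩⟩
  loopless := ⟨fun _ h => h.1.ne rfl⟩

instance [DecidableRel G.Adj] [DecidableEq κ] (i : κ) : DecidableRel (stackGraph G σ i).Adj :=
  fun u v => inferInstanceAs (Decidable (G.Adj u v ∧ σ s(u, v) = i))

/-- `σ` is a partition of the edges of `G` into stacks indexed by `κ`, for the given ordering of
the vertices. -/
def IsStackLayout [LinearOrder V] (G : SimpleGraph V) (σ : Sym2 V → κ) : Prop :=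
  ∀ i, IsNonCrossing (stackGraph G σ i)

lemma HasStackLayout.exists_isStackLayout {k : ℕ} (hG : HasStackLayout G k) :
    ∃ (_ : LinearOrder V) (σ : Sym2 V → Fin k), IsStackLayout G σ := by
  obtain ⟨f, hf, σ, hσ⟩ := hG
  exact ⟨LinearOrder.lift' f hf, σ, fun _ a b c d hab hcd =>
    hσ a b c d hab.1 hcd.1 (hab.2.trans hcd.2.symm)⟩

lemma card_edgeFinset_eq_sum_stackGraph [Fintype κ] (G : SimpleGraph V) (σ : Sym2 V → κ)
    [Fintype G.edgeSet] [∀ i, Fintype (stackGraph G σ i).edgeSet] :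
    #G.edgeFinset = ∑ i, #(stackGraph G σ i).edgeFinset := by
  classical
  rw [card_eq_sum_card_fiberwise (f := σ) (t := univ) fun _ _ => mem_coe.2 (mem_univ _)]
  refine sum_congr rfl fun i _ => congrArg card ?_
  ext e
  induction e with
  | _ u v =>
    rw [mem_filter, mem_edgeFinset, mem_edgeFinset]
    exact Iff.rfl

lemma stackGraph_le (i : κ) : stackGraph G σ i ≤ G :=
  fun _ _ h => h.1

namespace IsStackLayout

variable [LinearOrder V]

lemma mono (h : IsStackLayout G σ) (hHG : H ≤ G) : IsStackLayout H σ :=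
  fun i _ _ _ _ hab hcd => h i ⟨hHG hab.1, hab.2⟩ ⟨hHG hcd.1, hcd.2⟩

variable [Fintype κ]

lemma card_edgeFinset_le [Fintype G.edgeSet] (h : IsStackLayout G σ) {S : Finset V}
    (hS : G.support ⊆ S) : #G.edgeFinset ≤ 2 * Fintype.card κ * #S := by
  have (i : κ) : Fintype (stackGraph G σ i).edgeSet :=
    ((Set.toFinite G.edgeSet).subset (edgeSet_mono (stackGraph_le i))).fintype
  calc #G.edgeFinset
    _ = ∑ i, #(stackGraph G σ i).edgeFinset := card_edgeFinset_eq_sum_stackGraph G σ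
    _ ≤ ∑ _ : κ, 2 * #S :=
        sum_le_sum fun i _ => (h i).card_edgeFinset_le ((support_mono (stackGraph_le i)).trans hS)
    _ = 2 * Fintype.card κ * #S := by rw [sum_const, card_univ, smul_eq_mul]; ring

lemma card_le_three_mul_of_card_lt_card_adj [DecidableRel G.Adj] (h : IsStackLayout G σ)
    {A B : Finset V} (hAB : Disjoint A B)
    (hA : ∀ a ∈ A, Fintype.card κ < #{b ∈ B | G.Adj a b}) :
    #A ≤ 3 * Fintype.card κ * #B := by
  classical
  let A' (i : κ) : Finset V := {a ∈ A | 1 < #{b ∈ B | (stackGraph G σ i).Adj a b}}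
  have hcover : A ⊆ univ.biUnion A' := by
    intro a ha
    obtain ⟨i, -, hi⟩ := exists_lt_card_fiber_of_mul_lt_card_of_maps_to
      (s := {b ∈ B | G.Adj a b}) (t := univ) (f := fun b => σ s(a, b)) (n := 1)
      (fun _ _ => mem_univ _) (by simpa using hA a ha)
    rw [filter_filter] at hi
    exact mem_biUnion.2 ⟨i, mem_univ i, mem_filter.2 ⟨ha, hi⟩⟩
  have hA' (i : κ) : #(A' i) ≤ 3 * #B :=
    (h i).card_le_three_mul_of_one_lt_card_adj (hAB.mono_left (filter_subset _ _))
      fun _ ha => (mem_filter.1 ha).2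
  calc #A ≤ #(univ.biUnion A') := card_le_card hcover
    _ ≤ Fintype.card κ * (3 * #B) := card_biUnion_le_card_mul _ _ _ fun i _ => hA' i
    _ = 3 * Fintype.card κ * #B := by ring

theorem exists_lowDegree_or_lightEdge [Fintype V] [DecidableRel G.Adj]
    (h : IsStackLayout G σ) (hG : G ≠ ⊥) :
    (∃ v, 0 < G.degree v ∧ G.degree v ≤ Fintype.card κ) ∨
      ∃ x y, G.Adj x y ∧ G.degree x ≤ 4 * Fintype.card κ * (3 * Fintype.card κ + 1) ∧
        G.degree y ≤ 4 * Fintype.card κ * (3 * Fintype.card κ + 1) := by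
  by_contra! ⟨hlow, hheavy⟩
  set k := Fintype.card κ
  set d := 4 * k * (3 * k + 1) with hd
  let A : Finset V := {v | 0 < G.degree v ∧ G.degree v ≤ d}
  let B : Finset V := {v | d < G.degree v}
  have hAB : Disjoint A B := disjoint_filter.2 fun _ _ hA => hA.2.not_gt
  have hsupp : G.support ⊆ (A ∪ B : Finset V) := by
    intro v hv
    have hpos := (G.degree_pos_iff_mem_support v).2 hv
    simpa [A, B, hpos] using le_or_gt _ _
  have hB : B.Nonempty := by
    obtain ⟨u, v, huv⟩ := ne_bot_iff_exists_adj.1 hG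
    by_cases hu : G.degree u ≤ d
    · exact ⟨v, by simpa [B] using hheavy u v huv hu⟩
    · exact ⟨u, by simpa [B] using hu⟩
  have hA : #A ≤ 3 * k * #B := h.card_le_three_mul_of_card_lt_card_adj hAB fun a ha => by
    obtain ⟨-, hpos, hle⟩ := mem_filter.1 ha
    have hnbr : G.neighborFinset a ⊆ {b ∈ B | G.Adj a b} := fun b hab => by
      rw [mem_neighborFinset] at hab
      simpa [B, hab] using hheavy a b hab hle
    exact (hlow a hpos).trans_le (card_le_card hnbr)
  refine lt_irrefl (d * #B) ?_
  calc d * #B = ∑ _ ∈ B, d := by rw [sum_const, smul_eq_mul, mul_comm]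
    _ < ∑ v ∈ B, G.degree v := sum_lt_sum_of_nonempty hB fun v hv => (mem_filter.1 hv).2
    _ ≤ ∑ v, G.degree v := sum_le_sum_of_subset (subset_univ B)
    _ = 2 * #G.edgeFinset := G.sum_degrees_eq_twice_card_edges
    _ ≤ 2 * (2 * k * #(A ∪ B)) := Nat.mul_le_mul_left 2 (h.card_edgeFinset_le hsupp)
    _ ≤ 2 * (2 * k * (3 * k * #B + #B)) := by
        gcongr
        exact (card_union_le A B).trans (Nat.add_le_add_right hA _)
    _ = d * #B := by rw [hd]; ring

end IsStackLayout

end StackLayout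

/-- For every integer `k ≥ 1` there exists an integer `d` such that every finite simple graph
admitting a `k`-stack layout is `(k+1, d)`-choosable. -/
theorem stmt8 (k : ℕ) (hk : 1 ≤ k) :
    ∃ d : ℤ, ∀ (V : Type) [Fintype V] (G : SimpleGraph V),
      HasStackLayout G k → Choosable G (k + 1) d := by
  classical
  refine ⟨(4 * k * (3 * k + 1) : ℕ), fun V _ G hG L hL => ?_⟩
  obtain ⟨_, σ, hσ⟩ := hG.exists_isStackLayout
  obtain ⟨c, hcL, hc⟩ := exists_isDefectiveColoring_of_lowDegree_or_lightEdge G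
    (k := k) (d := 4 * k * (3 * k + 1))
    (fun H hHG hH => by simpa using (hσ.mono hHG).exists_lowDegree_or_lightEdge hH)
    L (fun v => (hL v).symm ▸ k.lt_succ_self)
  exact ⟨c, hcL, fun v => mod_cast hc v⟩
end

section
/- For every integer k ≥ 1 there exists an integer d such that every finite simple graph admitting a k-queue layout is (2k+1, d)-choosable. -/
/-!
The proof rests on a light edge lemma: a graph with a `k`-queue layout and at least one edge has
either a non-isolated vertex of degree at most `2k`, or an edge whose ends both have degree at most
`d = 4k(2k+1)`. Choosability with defect `d` follows by induction on the edge set: a vertex of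
degree at most `2k` can be coloured last, with a colour missing from its neighbours, and an edge
whose ends have degree at most `d` can be deleted, since its ends never exceed the defect bound.

For the light edge lemma, suppose that every non-isolated vertex has degree more than `2k` and that
there is no light edge. Let `A` and `B` be the sets of non-isolated vertices of degree at most `d`
and more than `d`, so that all neighbours of `A` lie in `B`. Each vertex of `A` has two neighbours
joined to it in the same queue and on the same side of it; absence of nesting makes the earlier of
the two determine the vertex, given queue and side, so `|A| ≤ 2k|B|`. On the other hand, numbering
the non-isolated vertices in order, two edges of the same queue have different sums of the numbers
of their ends, so there are at most `2k(|A|+|B|)` edges. Hence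
`(d+1)|B| ≤ 4k(|A|+|B|) ≤ 4k(2k+1)|B| = d|B|`, so `B`, and with it `A`, is empty.
-/

open SimpleGraph

universe u v

open Finset

section DefectiveChoosability

variable {V : Type*} {G : SimpleGraph V} {m : ℕ} {d : ℤ}

theorem choosable_bot (hm : 0 < m) (hd : 0 ≤ d) : Choosable (⊥ : SimpleGraph V) m d := by
  intro L hL
  have hne (v : V) : (L v).Nonempty := card_pos.1 (by rwa [hL])
  choose c hc using hne
  exact ⟨c, hc, by simp [hd]⟩

theorem Choosable.of_deleteIncidenceSet {v : V} [Fintype (G.neighborSet v)] (hv : G.degree v < m)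
    (h : Choosable (G.deleteIncidenceSet v) m d) : Choosable G m d := by
  classical
  intro L hL
  obtain ⟨c, hcL, hcd⟩ := h L hL
  have hcard : #((G.neighborFinset v).image c) < #(L v) :=
    card_image_le.trans_lt (by rwa [card_neighborFinset_eq_degree, hL])
  obtain ⟨x, hxL, hx⟩ := exists_mem_notMem_of_card_lt_card hcard
  have hx_ne : ∀ w, G.Adj v w → c w ≠ x := by simpa using hx
  refine ⟨Function.update c v x, fun u => ?_, fun u => ?_⟩
  · obtain rfl | huv := eq_or_ne u v <;> simp [*]
  · have hsame_colour : {w | G.Adj u w ∧ Function.update c v x w = Function.update c v x u} =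
        {w | (G.deleteIncidenceSet v).Adj u w ∧ c w = c u} := by
      ext w
      have hxu : G.Adj u v → c u ≠ x := fun huv => hx_ne u huv.symm
      simp only [Set.mem_ofPred_eq, deleteIncidenceSet_adj, Function.update_apply]
      grind [G.irrefl]
    rw [hsame_colour]
    exact hcd u

theorem ncard_setOf_adj_and_le_degree (v : V) [Fintype (G.neighborSet v)] (p : V → Prop) :
    {w | G.Adj v w ∧ p w}.ncard ≤ G.degree v := by
  rw [← card_neighborFinset_eq_degree, ← Set.ncard_coe_finset]
  exact Set.ncard_le_ncard (fun w hw => by simpa using hw.1)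

theorem Choosable.of_deleteEdges {v w : V} [Fintype (G.neighborSet v)] [Fintype (G.neighborSet w)]
    (hv : G.degree v ≤ d) (hw : G.degree w ≤ d) (h : Choosable (G.deleteEdges {s(v, w)}) m d) :
    Choosable G m d := by
  intro L hL
  obtain ⟨c, hcL, hcd⟩ := h L hL
  refine ⟨c, hcL, fun u => ?_⟩
  by_cases huv : u = v
  · subst huv
    exact (Nat.cast_le.2 (ncard_setOf_adj_and_le_degree u _)).trans hv
  by_cases huw : u = w
  · subst huw
    exact (Nat.cast_le.2 (ncard_setOf_adj_and_le_degree u _)).trans hw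
  simpa [huv, huw] using hcd u

/-- The graph `G` has an edge which is `d`-light: both its ends have degree at most `d`. -/
def HasLightEdge (G : SimpleGraph V) [G.LocallyFinite] (d : ℕ) : Prop :=
  ∃ v w, G.Adj v w ∧ G.degree v ≤ d ∧ G.degree w ≤ d

theorem choosable_of_forall_le_hasLightEdge [Fintype V] {d : ℕ}
    (hG : ∀ (H : SimpleGraph V) [DecidableRel H.Adj], H ≤ G → H ≠ ⊥ →
      (∃ v ∈ H.support, H.degree v < m) ∨ HasLightEdge H d)
    (hm : 0 < m) : Choosable G m d := by
  classical
  induction G using WellFoundedLT.induction with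
  | ind G ih =>
  have choosable_of_lt {H : SimpleGraph V} (hlt : H < G) : Choosable H m d :=
    ih H hlt fun K _ hK => hG K (hK.trans hlt.le)
  obtain rfl | hne := eq_or_ne G ⊥
  · exact choosable_bot hm (Int.natCast_nonneg d)
  obtain ⟨v, ⟨w, hvw⟩, hv⟩ | ⟨v, w, hvw, hv, hw⟩ := hG G le_rfl hne
  · have hlt : G.deleteIncidenceSet v < G :=
      (deleteIncidenceSet_le G v).lt_of_not_ge fun h => (deleteIncidenceSet_adj.1 (h hvw)).2.1 rfl
    exact (choosable_of_lt hlt).of_deleteIncidenceSet hv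
  · have hlt : G.deleteEdges {s(v, w)} < G :=
      (deleteEdges_le _).lt_of_not_ge fun h => (deleteEdges_adj.1 (h hvw)).2 rfl
    exact (choosable_of_lt hlt).of_deleteEdges (Nat.cast_le.2 hv) (Nat.cast_le.2 hw)

end DefectiveChoosability

theorem strictMonoOn_card_filter_lt {α : Type*} [Preorder α] [DecidableLT α] (s : Finset α) :
    StrictMonoOn (fun a => #{b ∈ s | b < a}) s := by
  intro a ha b _ hab
  have hsub : {c ∈ s | c < a} ⊆ {c ∈ s | c < b} :=
    monotone_filter_right s fun _ _ hca => lt_trans hca hab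
  exact card_lt_card ((ssubset_iff_of_subset hsub).2 ⟨a, by simpa [hab] using ha, by simp⟩)

section QueueAssignment

variable {V ι : Type*} [LinearOrder V] {G H : SimpleGraph V} {σ : Sym2 V → ι}

/-- The queue assignment of a queue layout with vertex order `<`: the map `σ` assigns each edge of
`G` to a queue, and no two edges in a common queue are nested. Values of `σ` on non-edges are
irrelevant. -/
def IsQueueAssignment (G : SimpleGraph V) (σ : Sym2 V → ι) : Prop :=
  ∀ a b c d, G.Adj a b → G.Adj c d → σ s(a, b) = σ s(c, d) → ¬(a < c ∧ c < d ∧ d < b)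

theorem IsQueueAssignment.mono (hσ : IsQueueAssignment G σ) (hHG : H ≤ G) :
    IsQueueAssignment H σ :=
  fun a b c d hab hcd => hσ a b c d (hHG hab) (hHG hcd)

theorem exists_lt_eq_mk_of_mem_edgeSet {e : Sym2 V} (he : e ∈ G.edgeSet) :
    ∃ a b, a < b ∧ G.Adj a b ∧ e = s(a, b) := by
  obtain ⟨a, b⟩ := e
  have hab : G.Adj a b := he
  obtain hlt | hlt := hab.ne.lt_or_gt
  · exact ⟨a, b, hlt, hab, rfl⟩
  · exact ⟨b, a, hlt, hab.symm, Sym2.eq_swap⟩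

theorem IsQueueAssignment.not_lt_of_add_eq (hσ : IsQueueAssignment G σ) {f : V → ℕ}
    (hf : StrictMonoOn f G.support) {a b c d : V} (hab : G.Adj a b) (hcd : G.Adj c d)
    (hq : σ s(a, b) = σ s(c, d)) (hadd : f a + f b = f c + f d) (hlt : c < d) : ¬a < c := by
  intro hac
  have hf_ac : f a < f c := hf hab.mem_support_left hcd.mem_support_left hac
  have hdb : d < b := (hf.lt_iff_lt hcd.mem_support_right hab.mem_support_right).1 (by omega)
  exact hσ a b c d hab hcd hq ⟨hac, hlt, hdb⟩

theorem IsQueueAssignment.injOn_queue_add (hσ : IsQueueAssignment G σ) {f : V → ℕ}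
    (hf : StrictMonoOn f G.support) :
    Set.InjOn (fun e => (σ e, (e.map f).add)) G.edgeSet := by
  intro e he e' he' heq
  obtain ⟨a, b, hlt_ab, hab, rfl⟩ := exists_lt_eq_mk_of_mem_edgeSet he
  obtain ⟨c, d, hlt_cd, hcd, rfl⟩ := exists_lt_eq_mk_of_mem_edgeSet he'
  simp only [Sym2.map_mk, Sym2.add_mk, Prod.mk.injEq] at heq
  obtain ⟨hq, hadd⟩ := heq
  obtain rfl : a = c := le_antisymm
    (not_lt.1 (hσ.not_lt_of_add_eq hf hcd hab hq.symm hadd.symm hlt_ab))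
    (not_lt.1 (hσ.not_lt_of_add_eq hf hab hcd hq hadd hlt_cd))
  obtain rfl : b = d :=
    hf.injOn hab.mem_support_right hcd.mem_support_right (Nat.add_left_cancel hadd)
  rfl

theorem IsQueueAssignment.card_edgeFinset_le [Fintype ι] [Fintype G.edgeSet] [Fintype G.support]
    (hσ : IsQueueAssignment G σ) :
    #G.edgeFinset ≤ 2 * Fintype.card ι * #G.support.toFinset := by
  set S := G.support.toFinset
  let rank (a : V) : ℕ := #{b ∈ S | b < a}
  have hrank : StrictMonoOn rank G.support := by
    simpa [S] using strictMonoOn_card_filter_lt S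
  have hrank_lt {a : V} (ha : a ∈ G.support) : rank a < #S :=
    card_lt_card (filter_ssubset.2 ⟨a, by simpa [S] using ha, lt_irrefl a⟩)
  have hmaps : Set.MapsTo (fun e => (σ e, (e.map rank).add)) G.edgeFinset
      (univ ×ˢ range (2 * #S) : Finset (ι × ℕ)) := by
    rintro ⟨a, b⟩ hab
    have hadj : G.Adj a b := by simpa using hab
    have hsum_lt : rank a + rank b < 2 * #S := by
      linarith [hrank_lt hadj.mem_support_left, hrank_lt hadj.mem_support_right]
    simpa using hsum_lt
  calc #G.edgeFinset ≤ #((univ : Finset ι) ×ˢ range (2 * #S)) :=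
        card_le_card_of_injOn _ hmaps (by simpa using hσ.injOn_queue_add hrank)
    _ = 2 * Fintype.card ι * #S := by rw [card_product, card_univ, card_range]; ring

/-- A later twin of an edge `ab` at its end `a` is an edge `ab'` in the same queue, with `b'` after
`b` and on the same side of `a` as `b`. Among the edges at `b` with a later twin at their other end,
the queue and the side of `b` determine the edge. Adjacency of `a` and `b` is not part of the
definition. -/
def HasLaterTwin (G : SimpleGraph V) (σ : Sym2 V → ι) (a b : V) : Prop :=
  ∃ b', G.Adj a b' ∧ b < b' ∧ σ s(a, b') = σ s(a, b) ∧ (a < b' ↔ a < b)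

theorem exists_adj_hasLaterTwin [Fintype ι] {a : V} [Fintype (G.neighborSet a)]
    (ha : 2 * Fintype.card ι < G.degree a) (σ : Sym2 V → ι) :
    ∃ b, G.Adj a b ∧ HasLaterTwin G σ a b := by
  have hcard : #(univ : Finset (ι × Bool)) < #(G.neighborFinset a) := by
    simpa [mul_comm] using ha
  obtain ⟨b, hb, b', hb', hne, heq⟩ := exists_ne_map_eq_of_card_lt_of_maps_to hcard
    (f := fun b => (σ s(a, b), decide (a < b))) (by simp)
  simp only [Prod.mk.injEq, decide_eq_decide] at heq
  rw [mem_neighborFinset] at hb hb'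
  obtain hlt | hlt := hne.lt_or_gt
  · exact ⟨b, hb, b', hb', hlt, heq.1.symm, heq.2.symm⟩
  · exact ⟨b', hb', b, hb, hlt, heq.1, heq.2⟩

theorem IsQueueAssignment.not_lt_of_hasLaterTwin (hσ : IsQueueAssignment G σ) {x y b : V}
    (hx : HasLaterTwin G σ x b) (hy : G.Adj y b) (hq : σ s(x, b) = σ s(y, b))
    (hside : x < b ↔ y < b) : ¬x < y := by
  obtain ⟨b', hxb', hbb', hq', hside'⟩ := hx
  intro hxy
  by_cases hxb : x < b
  · exact hσ x b' y b hxb' hy (hq'.trans hq) ⟨hxy, hside.1 hxb, hbb'⟩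
  · have hb'x : b' < x := (not_lt.1 (mt hside'.1 hxb)).lt_of_ne hxb'.ne.symm
    refine hσ b y b' x hy.symm hxb'.symm ?_ ⟨hbb', hb'x, hxy⟩
    rw [Sym2.eq_swap, ← hq, ← hq', Sym2.eq_swap]

theorem IsQueueAssignment.eq_of_hasLaterTwin (hσ : IsQueueAssignment G σ) {x y b : V}
    (hxb : G.Adj x b) (hyb : G.Adj y b) (hx : HasLaterTwin G σ x b) (hy : HasLaterTwin G σ y b)
    (hq : σ s(x, b) = σ s(y, b)) (hside : x < b ↔ y < b) : x = y :=
  le_antisymm (not_lt.1 (hσ.not_lt_of_hasLaterTwin hy hxb hq.symm hside.symm))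
    (not_lt.1 (hσ.not_lt_of_hasLaterTwin hx hyb hq hside))

theorem IsQueueAssignment.card_le_of_neighborFinset_subset [Fintype ι] [G.LocallyFinite]
    (hσ : IsQueueAssignment G σ) {A B : Finset V} (hA : ∀ a ∈ A, 2 * Fintype.card ι < G.degree a)
    (hAB : ∀ a ∈ A, G.neighborFinset a ⊆ B) : #A ≤ 2 * Fintype.card ι * #B := by
  have htwin (a : A) : ∃ b, G.Adj a b ∧ HasLaterTwin G σ a b :=
    exists_adj_hasLaterTwin (hA a a.2) σ
  choose b hb using htwin
  let code (a : A) : (ι × Bool) × B :=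
    ((σ s(↑a, b a), decide (↑a < b a)), ⟨b a, hAB a a.2 (by simpa using (hb a).1)⟩)
  have hcode : Function.Injective code := by
    intro x y hxy
    simp only [code, Prod.mk.injEq, decide_eq_decide, Subtype.mk.injEq] at hxy
    obtain ⟨⟨hq, hside⟩, hbxy⟩ := hxy
    obtain ⟨hyb, hytwin⟩ := hb y
    rw [← hbxy] at hq hside hyb hytwin
    exact Subtype.ext (hσ.eq_of_hasLaterTwin (hb x).1 hyb (hb x).2 hytwin hq hside)
  simpa [mul_comm] using Fintype.card_le_of_injective code hcode

theorem IsQueueAssignment.hasLightEdge [Fintype ι] [Fintype V] [DecidableRel G.Adj]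
    (hσ : IsQueueAssignment G σ) (hne : G ≠ ⊥)
    (hdeg : ∀ v ∈ G.support, 2 * Fintype.card ι < G.degree v) :
    HasLightEdge G (4 * Fintype.card ι * (2 * Fintype.card ι + 1)) := by
  classical
  by_contra hlight
  set k := Fintype.card ι
  set d := 4 * k * (2 * k + 1) with hd
  set S := G.support.toFinset
  set A := {v ∈ S | G.degree v ≤ d}
  set B := {v ∈ S | ¬G.degree v ≤ d}
  have hA_le : #A ≤ 2 * k * #B := by
    refine hσ.card_le_of_neighborFinset_subset (fun a ha => ?_) fun a ha b hb => ?_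
    · exact hdeg a (by simpa [S] using (mem_filter.1 ha).1)
    · rw [mem_neighborFinset] at hb
      refine mem_filter.2 ⟨by simpa [S] using hb.mem_support_right, fun hbd => hlight ?_⟩
      exact ⟨a, b, hb, (mem_filter.1 ha).2, hbd⟩
  have hS_le : #S ≤ (2 * k + 1) * #B := by
    have hcard : #A + #B = #S := card_filter_add_card_filter_not _
    linarith
  have hB_mul_le : #B * (d + 1) ≤ d * #B :=
    calc #B * (d + 1) ≤ ∑ v ∈ B, G.degree v :=
          smul_eq_mul #B (d + 1) ▸ card_nsmul_le_sum B _ _ fun v hv => not_le.1 (mem_filter.1 hv).2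
      _ ≤ ∑ v ∈ S, G.degree v := sum_le_sum_of_subset (filter_subset _ _)
      _ = 2 * #G.edgeFinset := G.sum_degrees_support_eq_twice_card_edges
      _ ≤ 2 * (2 * k * #S) := by gcongr; exact hσ.card_edgeFinset_le
      _ ≤ 2 * (2 * k * ((2 * k + 1) * #B)) := by gcongr
      _ = d * #B := by rw [hd]; ring
  have hB : #B = 0 := by linarith
  have hS_zero : #S = 0 := by simpa [hB] using hS_le
  exact hne ((support_eq_bot_iff G).1 (Set.toFinset_eq_empty.1 (card_eq_zero.1 hS_zero)))

theorem IsQueueAssignment.choosable [Fintype ι] [Finite V] (hσ : IsQueueAssignment G σ) :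
    Choosable G (2 * Fintype.card ι + 1)
      (4 * Fintype.card ι * (2 * Fintype.card ι + 1) : ℕ) := by
  have := Fintype.ofFinite V
  refine choosable_of_forall_le_hasLightEdge (fun H _ hHG hH => ?_) (Nat.succ_pos _)
  by_cases hlow : ∃ v ∈ H.support, H.degree v < 2 * Fintype.card ι + 1
  · exact .inl hlow
  · push Not at hlow
    exact .inr ((hσ.mono hHG).hasLightEdge hH hlow)

end QueueAssignment

theorem HasQueueLayout.choosable {V : Type*} [Finite V] {G : SimpleGraph V} {k : ℕ}
    (hG : HasQueueLayout G k) : Choosable G (2 * k + 1) (4 * k * (2 * k + 1) : ℕ) := by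
  obtain ⟨f, hf, σ, hσ⟩ := hG
  let : LinearOrder V := LinearOrder.lift' f hf
  have hσ' : IsQueueAssignment G σ := hσ
  simpa using hσ'.choosable

/-- For every integer `k ≥ 1` there exists an integer `d` such that every finite simple graph
admitting a `k`-queue layout is `(2k+1, d)`-choosable. -/
theorem stmt9 (k : ℕ) (hk : 1 ≤ k) :
    ∃ d : ℤ, ∀ (V : Type) [Fintype V] (G : SimpleGraph V),
      HasQueueLayout G k → Choosable G (2 * k + 1) d :=
  ⟨_, fun _ _ _ hG => hG.choosable⟩
end
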